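/- Fix π̃ ∈ Π̃. If there exists a probability measure Q ≪ P_0 on Ω_0 which is invariant for the environment Markov kernel R_{π̃}, then Q is equivalent to P_0 (mutually absolutely continuous), the environment Markov chain with initial law Q and transition kernel R_{π̃} is stationary and ergodic, and Q is the unique R_{π̃}-invariant probability measure absolutely continuous with respect to P_0. -/

import Mathlib

open MeasureTheory ProbabilityTheory Filter Topology
open scoped ENNReal NNReal BigOperators

noncomputable section

namespace SRWPC

/-- Vertices of the lattice `ℤ^d`. -/
abbrev V (d : ℕ) := Fin d → ℤ

/-- Index of a nearest-neighbour bond: the bond from `x` to `x + eᵢ`. -/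
abbrev EdgeIx (d : ℕ) := V d × Fin d

/-- Percolation configurations `Ω = {0,1}^{𝔹_d}`. -/
abbrev Config (d : ℕ) := EdgeIx d → Bool

/-- The `i`-th coordinate unit vector. -/
def unitVec (d : ℕ) (i : Fin d) : V d := fun j => if j = i then 1 else 0

/-- The set `𝕌_d` of the `2d` unit vectors. -/
def Ud (d : ℕ) : Finset (V d) :=
  (Finset.univ.image (unitVec d)) ∪ (Finset.univ.image (fun i => -unitVec d i))

/-- The type of nearest-neighbour steps (elements of `𝕌_d`). -/
abbrev Step (d : ℕ) := {e : V d // e ∈ Ud d}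

/-- The shift `(τ_x ω)_b = ω_{x+b}`. -/
def shift {d : ℕ} (x : V d) (ω : Config d) : Config d := fun b => ω (b.1 + x, b.2)

/-- The bond from `x` to `x + e` is open in `ω`. -/
def edgeOpen {d : ℕ} (ω : Config d) (x e : V d) : Prop :=
  ∃ i : Fin d, (e = unitVec d i ∧ ω (x, i) = true) ∨
    (e = -unitVec d i ∧ ω (x - unitVec d i, i) = true)

open Classical in
/-- The number of open bonds incident to `x`. -/
def openDeg {d : ℕ} (ω : Config d) (x : V d) : ℕ :=
  ((Ud d).filter (fun e => edgeOpen ω x e)).card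

open Classical in
/-- The transition probability `π_ω(x,e)` of the simple random walk on the cluster. -/
def trans {d : ℕ} (ω : Config d) (x e : V d) : ℝ :=
  if edgeOpen ω x e then 1 / openDeg ω x else 0

/-- `γ` restricted to `{0,…,n}` is a nearest-neighbour open path in `ω`. -/
def IsOpenPath {d : ℕ} (ω : Config d) (γ : ℕ → V d) (n : ℕ) : Prop :=
  ∀ k < n, (γ (k + 1) - γ k) ∈ Ud d ∧ edgeOpen ω (γ k) (γ (k + 1) - γ k)

/-- `x` lies in the box `[-r,r]^d`. -/
def inBox {d : ℕ} (x : V d) (r : ℝ) : Prop := ∀ i, |(x i : ℝ)| ≤ r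

/-- `x` is joined to infinity by a nearest-neighbour open path, i.e. `x ∈ 𝒞_∞(ω)`. -/
def memCluster {d : ℕ} (ω : Config d) (x : V d) : Prop :=
  ∀ R : ℕ, ∃ (γ : ℕ → V d) (n : ℕ), γ 0 = x ∧ IsOpenPath ω γ n ∧ ¬ inBox (γ n) R

/-- The event `Ω_0 = {0 ∈ 𝒞_∞}`. -/
def cluZero (d : ℕ) : Set (Config d) := {ω | memCluster ω 0}

/-- `P` is the Bernoulli bond percolation product measure with parameter `q`. -/
def IsBernoulli (d : ℕ) (q : ℝ) (P : Measure (Config d)) : Prop :=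
  IsProbabilityMeasure P ∧
    ∀ (F : Finset (EdgeIx d)) (a : EdgeIx d → Bool),
      P {ω | ∀ b ∈ F, ω b = a b} = ∏ b ∈ F, ENNReal.ofReal (if a b then q else 1 - q)

/-- The critical probability `p_c(d)` of bond percolation on `ℤ^d`. -/
def pc (d : ℕ) : ℝ :=
  sInf {q : ℝ | q ∈ Set.Icc (0 : ℝ) 1 ∧
    ∀ P : Measure (Config d), IsBernoulli d q P → 0 < P (cluZero d)}

variable {d : ℕ}

/-- Position of the walk after `k` steps, given the sequence of steps `s`. -/
def pos {n : ℕ} (s : Fin n → Step d) (k : ℕ) : V d :=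
  ∑ j ∈ Finset.univ.filter (fun j : Fin n => (j : ℕ) < k), (s j).1

/-- The environment/step pair `(τ_{X_k} ω, X_{k+1} - X_k)` seen at time `k`. -/
def envPair (ω : Config d) {n : ℕ} (s : Fin n → Step d) (k : Fin n) : Config d × Step d :=
  (shift (pos s k) ω, s k)

/-- Quenched probability of a given sequence of `n` steps under the Markov kernel `κ`. -/
def pathProb (κ : Config d → Step d → ℝ) (ω : Config d) {n : ℕ} (s : Fin n → Step d) : ℝ :=
  ∏ k : Fin n, κ (shift (pos s k) ω) (s k)

/-- The SRWPC transition kernel `π`. -/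
def srw (d : ℕ) : Config d → Step d → ℝ := fun ω e => trans ω 0 e.1

/-- Quenched expectation (under `P_0^{κ,ω}`) of a functional of the first `n` steps. -/
def qE (κ : Config d → Step d → ℝ) (ω : Config d) {n : ℕ} (F : (Fin n → Step d) → ℝ) : ℝ :=
  ∑ s : Fin n → Step d, pathProb κ ω s * F s

/-- Quenched probability (under `P_0^{κ,ω}`) of a set of `n`-step trajectories. -/
def qP (κ : Config d → Step d → ℝ) (ω : Config d) {n : ℕ} (A : Set (Fin n → Step d)) : ℝ :=
  ∑ s : Fin n → Step d, A.indicator (fun s' => pathProb κ ω s') s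

/-- Quenched probability, `ℝ≥0∞`-valued. -/
def qPE (κ : Config d → Step d → ℝ) (ω : Config d) {n : ℕ} (A : Set (Fin n → Step d)) : ℝ≥0∞ :=
  ENNReal.ofReal (qP κ ω A)

/-- The environment-step space `Ω_0 × 𝕌_d`. -/
abbrev EnvSp (d : ℕ) := Config d × Step d

/-- The pair empirical measure `ℒ_n` as a measure. -/
def empMeas (ω : Config d) {n : ℕ} (s : Fin n → Step d) : Measure (EnvSp d) :=
  (n : ℝ≥0∞)⁻¹ • ∑ k : Fin n, Measure.dirac (envPair ω s k)

lemma empMeas_isProb (ω : Config d) {n : ℕ} (hn : n ≠ 0) (s : Fin n → Step d) :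
    IsProbabilityMeasure (empMeas ω s) := by
  constructor
  simp only [empMeas, Measure.smul_apply, Measure.coe_finset_sum, Finset.sum_apply,
    Measure.dirac_apply_of_mem (Set.mem_univ _), smul_eq_mul]
  rw [Finset.sum_const, Finset.card_univ, Fintype.card_fin, nsmul_eq_mul, mul_one,
    ENNReal.inv_mul_cancel]
  · exact_mod_cast hn
  · exact ENNReal.natCast_ne_top n

/-- The pair empirical measure `ℒ_{n+1}` as a probability measure. -/
def empPM (ω : Config d) {n : ℕ} (s : Fin (n + 1) → Step d) : ProbabilityMeasure (EnvSp d) :=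
  ⟨empMeas ω s, empMeas_isProb ω (Nat.succ_ne_zero n) s⟩

/-- First marginal `(μ)_1` of a measure on `Ω_0 × 𝕌_d`. -/
def marg1 (μ : Measure (EnvSp d)) : Measure (Config d) := μ.map Prod.fst

/-- Second marginal `(μ)_2` of a measure on `Ω_0 × 𝕌_d`. -/
def marg2 (μ : Measure (EnvSp d)) : Measure (Config d) := μ.map (fun q => shift q.2.1 q.1)

/-- The slice `dμ(·, e)` of a measure on `Ω_0 × 𝕌_d` at a fixed step `e`. -/
def slice (μ : Measure (EnvSp d)) (e : Step d) : Measure (Config d) :=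
  (μ.restrict (Set.univ ×ˢ {e})).map Prod.fst

/-- The space `ℳ_1⋆`: probability measures on `Ω_0 × 𝕌_d` whose two marginals coincide and
are absolutely continuous w.r.t. `P₀`, and whose densities `dμ(ω,e)/d(μ)_1(ω)` are positive
precisely on open edges, `P₀`-a.s. -/
def M1star (d : ℕ) (P₀ : Measure (Config d)) : Set (ProbabilityMeasure (EnvSp d)) :=
  {μ | marg1 μ.toMeasure = marg2 μ.toMeasure ∧ marg1 μ.toMeasure ≪ P₀ ∧
    ∃ ρ : Step d → Config d → ℝ≥0∞, (∀ e, Measurable (ρ e)) ∧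
      (∀ e, slice μ.toMeasure e = (marg1 μ.toMeasure).withDensity (ρ e)) ∧
      (∀ e : Step d, ∀ᵐ ω ∂P₀, (0 < ρ e ω ↔ edgeOpen ω 0 e.1))}

/-- The reference measure `π_ω(0,e) d(μ)_1(ω)` on `Ω_0 × 𝕌_d`. -/
def refM (μ : Measure (EnvSp d)) : Measure (EnvSp d) :=
  Measure.sum (fun e : Step d =>
    ((marg1 μ).withDensity (fun ω => ENNReal.ofReal (trans ω 0 e.1))).map (fun ω => (ω, e)))

/-- `x log x - x + 1`. -/
def klFun (x : ℝ) : ℝ := x * Real.log x - x + 1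

open Classical in
/-- The entropy functional `ℑ` (a relative entropy with respect to `refM μ`;
it equals `∫ Σ_e dμ(ω,e) log[dμ(ω,e) / (d(μ)_1(ω) π_ω(0,e))]` on `ℳ_1⋆` and `∞` otherwise). -/
def entI (P₀ : Measure (Config d)) (μ : ProbabilityMeasure (EnvSp d)) : ℝ≥0∞ :=
  if μ ∈ M1star d P₀ ∧ μ.toMeasure ≪ refM μ.toMeasure then
    ∫⁻ q, ENNReal.ofReal (klFun ((μ.toMeasure.rnDeriv (refM μ.toMeasure)) q).toReal)
      ∂(refM μ.toMeasure)
  else ∞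

/-- The pairing `⟨f, μ⟩`. -/
def pairing (f : EnvSp d → ℝ) (μ : ProbabilityMeasure (EnvSp d)) : ℝ :=
  ∫ q, f q ∂μ.toMeasure

/-- The Fenchel–Legendre transform `ℑ⋆` of `ℑ`. -/
def entIstar (P₀ : Measure (Config d)) (f : BoundedContinuousFunction (EnvSp d) ℝ) : EReal :=
  ⨆ μ : ProbabilityMeasure (EnvSp d),
    ((pairing f μ : ℝ) : EReal) - ((entI P₀ μ : ℝ≥0∞) : EReal)

/-- The double Fenchel–Legendre transform `ℑ⋆⋆` of `ℑ`. -/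
def entIbis (P₀ : Measure (Config d)) (μ : ProbabilityMeasure (EnvSp d)) : EReal :=
  ⨆ f : BoundedContinuousFunction (EnvSp d) ℝ,
    ((pairing f μ : ℝ) : EReal) - entIstar P₀ f

/-- The contraction map `ξ(μ) = ∫ Σ_e e dμ(ω,e)`. -/
def xi (μ : ProbabilityMeasure (EnvSp d)) : Fin d → ℝ :=
  fun i => ∫ q, ((q.2.1 i : ℤ) : ℝ) ∂μ.toMeasure

/-- The mean velocity `X_n / n` of a trajectory. -/
def meanVel {n : ℕ} (s : Fin n → Step d) : Fin d → ℝ :=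
  fun i => (n : ℝ)⁻¹ * ((pos s n) i : ℝ)

/-- The class `Π̃` of environment transition kernels. -/
def PiT (d : ℕ) (P₀ : Measure (Config d)) : Set (Config d → Step d → ℝ) :=
  {κ | (∀ e : Step d, Measurable (fun ω => κ ω e)) ∧
    (∀ ω e, 0 ≤ κ ω e) ∧ (∀ e : Step d, ∀ᵐ ω ∂P₀, κ ω e ≤ 1) ∧
    (∀ᵐ ω ∂P₀, ∑ e : Step d, κ ω e = 1) ∧
    (∀ e : Step d, ∀ᵐ ω ∂P₀, (κ ω e = 0 ↔ trans ω 0 e.1 = 0))}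

/-- `φ dP₀` is an invariant probability density for the kernel `κ`. -/
def IsInvDensity (P₀ : Measure (Config d)) (κ : Config d → Step d → ℝ)
    (φ : Config d → ℝ) : Prop :=
  Measurable φ ∧ (∀ ω, 0 ≤ φ ω) ∧ (∫ ω, φ ω ∂P₀) = 1 ∧
    (∀ᵐ ω ∂P₀, φ ω = ∑ e : Step d, κ (shift (-e.1) ω) e * φ (shift (-e.1) ω))

/-- The set `ℰ` of pairs `(π̃, φ)`. -/
def Epairs (d : ℕ) (P₀ : Measure (Config d)) :
    Set ((Config d → Step d → ℝ) × (Config d → ℝ)) :=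
  {q | q.1 ∈ PiT d P₀ ∧ IsInvDensity P₀ q.1 q.2}

/-- The measure `dμ(ω,e) = π̃(ω,e) φ(ω) dP₀(ω)` associated with a pair `(π̃, φ)`. -/
def pairMeasure (P₀ : Measure (Config d)) (κ : Config d → Step d → ℝ)
    (φ : Config d → ℝ) : Measure (EnvSp d) :=
  Measure.sum (fun e : Step d =>
    (P₀.withDensity (fun ω => ENNReal.ofReal (κ ω e * φ ω))).map (fun ω => (ω, e)))

/-- The kernel `dμ/d(μ)_1` associated with a measure on `Ω_0 × 𝕌_d`. -/
def toKappa (μ : Measure (EnvSp d)) : Config d → Step d → ℝ :=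
  fun ω e => ((slice μ e).rnDeriv (marg1 μ) ω).toReal

/-- The density `d(μ)_1/dP₀` associated with a measure on `Ω_0 × 𝕌_d`. -/
def toPhi (P₀ : Measure (Config d)) (μ : Measure (EnvSp d)) : Config d → ℝ :=
  fun ω => ((marg1 μ).rnDeriv P₀ ω).toReal

/-- The environment Markov transition operator `R_κ`. -/
def kernelStep (κ : Config d → Step d → ℝ) (f : Config d → ℝ) : Config d → ℝ :=
  fun ω => ∑ e : Step d, κ ω e * f (shift e.1 ω)

/-- `Q` is an invariant measure for the environment kernel `R_κ`. -/
def IsInvariant (κ : Config d → Step d → ℝ) (Q : Measure (Config d)) : Prop :=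
  ∀ f : Config d → ℝ, Measurable f → (∃ C, ∀ ω, |f ω| ≤ C) →
    ∫ ω, kernelStep κ f ω ∂Q = ∫ ω, f ω ∂Q

/-- Partial sum `Σ_{k<m} f(τ_{X_k}ω, X_{k+1}-X_k)` along a trajectory of length `N`. -/
def partialSumF (f : EnvSp d → ℝ) (ω : Config d) {N : ℕ} (s : Fin N → Step d) (m : ℕ) : ℝ :=
  ∑ k ∈ Finset.univ.filter (fun k : Fin N => (k : ℕ) < m), f (envPair ω s k)

/-- The sum of `G` along the path `γ` up to time `n`. -/
def pathSum (G : Config d → V d → ℝ) (ω : Config d) (γ : ℕ → V d) (n : ℕ) : ℝ :=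
  ∑ k ∈ Finset.range n, G (shift (γ k) ω) (γ (k + 1) - γ k)

/-- The class `𝒢_∞` of gradients: zero mean, uniformly bounded, closed loops. -/
def Ginfty (d : ℕ) (P₀ : Measure (Config d)) : Set (Config d → V d → ℝ) :=
  {G | (∀ e ∈ Ud d, Measurable (fun ω => G ω e)) ∧
    (∀ e ∈ Ud d, ∫ ω, G ω e ∂P₀ = 0) ∧
    (∃ M : ℝ, ∀ e ∈ Ud d, ∀ᵐ ω ∂P₀, |G ω e| ≤ M) ∧
    (∀ᵐ ω ∂P₀, ∀ (γ : ℕ → V d) (n : ℕ),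
      memCluster ω (γ 0) → IsOpenPath ω γ n → γ n = γ 0 → pathSum G ω γ n = 0)}

open Classical in
/-- The corrector `Ψ(ω,x)`: the sum of `G` along some open path from `0` to `x`. -/
def corr (G : Config d → V d → ℝ) (ω : Config d) (x : V d) : ℝ :=
  if h : ∃ q : (ℕ → V d) × ℕ, q.1 0 = 0 ∧ q.1 q.2 = x ∧ IsOpenPath ω q.1 q.2
  then pathSum G ω h.choose.1 h.choose.2 else 0

/-- The chemical distance: minimal length of an open path joining `x` and `y`. -/
def chemDist (ω : Config d) (x y : V d) : ℕ :=
  sInf {n : ℕ | ∃ γ : ℕ → V d, γ 0 = x ∧ γ n = y ∧ IsOpenPath ω γ n}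

open Classical in
/-- The functional `Λ(f,G)`. -/
def Lam (P₀ : Measure (Config d)) (f : EnvSp d → ℝ) (G : Config d → V d → ℝ) : EReal :=
  essSup (fun ω => ((Real.log (∑ e : Step d,
    if edgeOpen ω 0 e.1 then trans ω 0 e.1 * Real.exp (f (ω, e) + G ω e.1) else 0)) : EReal)) P₀

/-- The variational formula `H̄(f) = sup_{μ ∈ ℳ_1⋆} {⟨f,μ⟩ - ℑ(μ)}`. -/
def Hbar (P₀ : Measure (Config d)) (f : EnvSp d → ℝ) : EReal :=
  ⨆ μ ∈ M1star d P₀, ((pairing f μ : ℝ) : EReal) - ((entI P₀ μ : ℝ≥0∞) : EReal)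

/-- The finite σ-algebra `𝓑_k` recording all bonds in the box of size `k` around the origin. -/
def Bsig (d k : ℕ) : MeasurableSpace (Config d) :=
  MeasurableSpace.comap
    (fun (ω : Config d) (b : {b : EdgeIx d // ∀ i, |b.1 i| ≤ (k : ℤ)}) => ω b.1) inferInstance

end SRWPC

namespace SRWPC

section StopSet
variable {ι : Type*} [Fintype ι] [DecidableEq ι]

lemma sum_prod_pi (f : ι → Bool → ℝ) (hf : ∀ b, f b true + f b false = 1) :
    ∑ η : ι → Bool, ∏ b, f b (η b) = 1 := by
  have h := Finset.prod_univ_sum (fun _ : ι => (Finset.univ : Finset Bool)) f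
  rw [Fintype.piFinset_univ] at h
  rw [← h]
  simp [hf]

/-- Optional-stopping identity for a stopping set, proved by swapping two independent copies. -/
lemma stop_identity (u v : Bool → ℝ) (hu : u true + u false = 1) (hv : v true + v false = 1)
    (S : (ι → Bool) → Finset ι)
    (hS : ∀ ω ω', (∀ b ∈ S ω, ω b = ω' b) → S ω' = S ω) :
    ∑ ω : ι → Bool, (∏ b, if b ∈ S ω then u (ω b) else v (ω b)) = 1 := by
  classical
  let σ : (ι → Bool) × (ι → Bool) → (ι → Bool) × (ι → Bool) := fun z =>
    (fun b => if b ∈ S z.1 then z.1 b else z.2 b, fun b => if b ∈ S z.1 then z.2 b else z.1 b)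
  have hSσ : ∀ z, S (σ z).1 = S z.1 := by
    intro z
    apply hS
    intro b hb
    simp [σ, hb]
  have hinv : Function.Involutive σ := by
    intro z
    have h := hSσ z
    ext b
    · change (if b ∈ S (σ z).1 then (σ z).1 b else (σ z).2 b) = _
      rw [h]
      by_cases hb : b ∈ S z.1 <;> simp [σ, hb]
    · change (if b ∈ S (σ z).1 then (σ z).2 b else (σ z).1 b) = _
      rw [h]
      by_cases hb : b ∈ S z.1 <;> simp [σ, hb]
  let F : (ι → Bool) × (ι → Bool) → ℝ := fun z => (∏ b, u (z.1 b)) * ∏ b, v (z.2 b)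
  have h1 : ∑ z, F z = 1 := by
    rw [Fintype.sum_prod_type]
    simp only [F]
    simp_rw [← Finset.mul_sum]
    rw [sum_prod_pi (fun _ => v) (fun _ => hv)]
    simp only [mul_one]
    exact sum_prod_pi (fun _ => u) (fun _ => hu)
  have h2 : ∑ z, F (σ z) = ∑ z, F z := Equiv.sum_comp (hinv.toPerm) F
  rw [← h1, ← h2, Fintype.sum_prod_type]
  refine Finset.sum_congr rfl fun ω _ => ?_
  have h3 : ∀ ω' : ι → Bool, F (σ (ω, ω')) =
      (∏ b, if b ∈ S ω then u (ω b) else v (ω b)) *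
        ∏ b, (fun b t => if b ∈ S ω then v t else u t) b (ω' b) := by
    intro ω'
    simp only [F, ← Finset.prod_mul_distrib]
    refine Finset.prod_congr rfl fun b _ => ?_
    by_cases hb : b ∈ S ω <;> simp [σ, hb, mul_comm]
  simp_rw [h3]
  rw [← Finset.mul_sum, sum_prod_pi (fun b t => if b ∈ S ω then v t else u t), mul_one]
  intro b
  by_cases hb : b ∈ S ω <;> simp [hb, hu, hv]

/-- Bernoulli weight of a finite configuration. -/
def bw (p : ℝ) (η : ι → Bool) : ℝ := ∏ b, (if η b then p else 1 - p)

lemma bw_nonneg {p : ℝ} (hp0 : 0 < p) (hp1 : p < 1) (η : ι → Bool) : 0 ≤ bw p η := by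
  unfold bw
  refine Finset.prod_nonneg fun b _ => ?_
  split_ifs <;> linarith

lemma bw_sum (p : ℝ) : ∑ η : ι → Bool, bw p η = 1 := by
  unfold bw
  exact sum_prod_pi (fun _ t => if t then p else 1 - p) (by simp)

/-- The (reversed) score: `1/(1-p)` on closed edges, `-1/p` on open ones. -/
def sc (p : ℝ) (t : Bool) : ℝ := if t then -p⁻¹ else (1 - p)⁻¹

lemma stop_exp {p : ℝ} (hp0 : 0 < p) (hp1 : p < 1) (δ : ℝ)
    (S : (ι → Bool) → Finset ι)
    (hS : ∀ ω ω', (∀ b ∈ S ω, ω b = ω' b) → S ω' = S ω) :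
    ∑ η : ι → Bool, bw p η * ∏ b ∈ S η, (1 + δ * sc p (η b)) = 1 := by
  have h1p : (1 - p) ≠ 0 := by linarith
  refine Eq.trans ?_ (stop_identity (fun t => (if t then p else 1 - p) * (1 + δ * sc p t))
    (fun t => if t then p else 1 - p) (by simp [sc]; field_simp; ring) (by simp) S hS)
  refine Finset.sum_congr rfl fun η _ => ?_
  have : ∏ b ∈ S η, (1 + δ * sc p (η b)) =
      ∏ b, (if b ∈ S η then (1 + δ * sc p (η b)) else 1) := by
    rw [Finset.prod_ite_mem]; simp
  rw [this, bw, ← Finset.prod_mul_distrib]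
  refine Finset.prod_congr rfl fun b _ => ?_
  by_cases hb : b ∈ S η <;> simp [hb]

lemma lin_le_prod (T : Finset ι) (t : ι → ℝ) (C : ℝ) (h : ∀ b ∈ T, |t b| ≤ 1 / 2)
    (hC : ∀ b ∈ T, 2 * (t b) ^ 2 ≤ C) :
    ∑ b ∈ T, t b ≤ C * T.card + ∏ b ∈ T, (1 + t b) := by
  have key : ∀ b ∈ T, Real.exp (t b - C) ≤ 1 + t b := by
    intro b hb
    have h1 := abs_le.1 (h b hb)
    have hpos : 0 < 1 + t b := by linarith
    rw [← Real.le_log_iff_exp_le hpos]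
    refine le_trans ?_ (Real.one_sub_inv_le_log_of_pos hpos)
    have h2 := hC b hb
    have : 1 - (1 + t b)⁻¹ = t b / (1 + t b) := by field_simp; ring
    rw [this, le_div_iff₀ hpos]
    nlinarith [sq_nonneg (t b), mul_nonneg (sub_nonneg.2 h2) hpos.le,
      mul_nonneg (sq_nonneg (t b)) (by linarith : (0:ℝ) ≤ 1/2 + t b)]
  have h3 : Real.exp (∑ b ∈ T, (t b - C)) ≤ ∏ b ∈ T, (1 + t b) := by
    rw [Real.exp_sum]
    exact Finset.prod_le_prod (fun b _ => (Real.exp_pos _).le) key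
  have h4 := Real.add_one_le_exp (∑ b ∈ T, (t b - C))
  rw [Finset.sum_sub_distrib, Finset.sum_const, nsmul_eq_mul] at h4 h3
  linarith

end StopSet
end SRWPC

namespace SRWPC

section Graph
variable {d : ℕ}

/-- Open adjacency. -/
def Adj (ω : Config d) (x y : V d) : Prop :=
  ∃ i, (y = x + unitVec d i ∧ ω (x, i) = true) ∨ (x = y + unitVec d i ∧ ω (y, i) = true)

/-- Open connection. -/
def Conn (ω : Config d) : V d → V d → Prop := Relation.ReflTransGen (Adj ω)

lemma Adj.symm {ω : Config d} {x y : V d} (h : Adj ω x y) : Adj ω y x := by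
  obtain ⟨i, h | h⟩ := h
  · exact ⟨i, Or.inr h⟩
  · exact ⟨i, Or.inl h⟩

lemma Conn.refl (ω : Config d) (x : V d) : Conn ω x x := Relation.ReflTransGen.refl

lemma Conn.symm {ω : Config d} {x y : V d} (h : Conn ω x y) : Conn ω y x := by
  induction h with
  | refl => exact Conn.refl _ _
  | tail _ h2 ih => exact Relation.ReflTransGen.head h2.symm ih

lemma Conn.trans {ω : Config d} {x y z : V d} (h : Conn ω x y) (h' : Conn ω y z) :
    Conn ω x z := Relation.ReflTransGen.trans h h'

lemma Adj.mono {ω ω' : Config d} (hle : ∀ b, ω b = true → ω' b = true) {x y : V d}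
    (h : Adj ω x y) : Adj ω' x y := by
  obtain ⟨i, h | h⟩ := h
  · exact ⟨i, Or.inl ⟨h.1, hle _ h.2⟩⟩
  · exact ⟨i, Or.inr ⟨h.1, hle _ h.2⟩⟩

lemma Conn.mono {ω ω' : Config d} (hle : ∀ b, ω b = true → ω' b = true) {x y : V d}
    (h : Conn ω x y) : Conn ω' x y :=
  Relation.ReflTransGen.mono (fun _ _ h => Adj.mono hle h) _ _ h

/-- Extension of a finite configuration by closed edges. -/
def ext (F : Finset (EdgeIx d)) (η : F → Bool) : Config d :=
  fun b => if h : b ∈ F then η ⟨b, h⟩ else false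

/-- The second endpoint of a bond. -/
def tip (b : EdgeIx d) : V d := b.1 + unitVec d b.2

open Classical in
/-- Bonds of `F` touching the cluster of `W`. -/
def touch (F : Finset (EdgeIx d)) (W : Finset (V d)) (η : F → Bool) : Finset F :=
  Finset.univ.filter fun b => ∃ x ∈ W, Conn (ext F η) x b.1.1 ∨ Conn (ext F η) x (tip b.1)

lemma touch_adj {F : Finset (EdgeIx d)} {W : Finset (V d)} {η η' : F → Bool}
    (h : ∀ b ∈ touch F W η, η b = η' b) {x y z : V d} (hx : x ∈ W) (hc : Conn (ext F η) x y) :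
    Adj (ext F η) y z ↔ Adj (ext F η') y z := by
  have h1 : ∀ i, ext F η (y, i) = ext F η' (y, i) := by
    intro i
    by_cases hF : (y, i) ∈ F
    · simp only [ext, hF, dite_true]
      apply h
      simp only [touch, Finset.mem_filter, Finset.mem_univ, true_and]
      exact ⟨x, hx, Or.inl hc⟩
    · simp [ext, hF]
  have h2 : ∀ i, y = z + unitVec d i → ext F η (z, i) = ext F η' (z, i) := by
    intro i hyz
    by_cases hF : (z, i) ∈ F
    · simp only [ext, hF, dite_true]
      apply h
      simp only [touch, Finset.mem_filter, Finset.mem_univ, true_and]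
      refine ⟨x, hx, Or.inr ?_⟩
      rw [tip, ← hyz]
      exact hc
    · simp [ext, hF]
  unfold Adj
  refine exists_congr fun i => ?_
  rw [h1 i]
  refine or_congr Iff.rfl (and_congr_right fun hyz => ?_)
  rw [h2 i hyz]

lemma touch_conn {F : Finset (EdgeIx d)} {W : Finset (V d)} {η η' : F → Bool}
    (h : ∀ b ∈ touch F W η, η b = η' b) {x y : V d} (hx : x ∈ W) :
    Conn (ext F η) x y ↔ Conn (ext F η') x y := by
  constructor
  · intro hc
    induction hc with
    | refl => exact Conn.refl _ _
    | tail h1 h2 ih => exact Relation.ReflTransGen.tail ih ((touch_adj h hx h1).1 h2)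
  · intro hc
    induction hc with
    | refl => exact Conn.refl _ _
    | tail h1 h2 ih => exact Relation.ReflTransGen.tail ih ((touch_adj h hx ih).2 h2)

lemma touch_stop (F : Finset (EdgeIx d)) (W : Finset (V d)) (η η' : F → Bool)
    (h : ∀ b ∈ touch F W η, η b = η' b) : touch F W η' = touch F W η := by
  ext b
  simp only [touch, Finset.mem_filter, Finset.mem_univ, true_and]
  refine exists_congr fun x => and_congr_right fun hx => ?_
  rw [touch_conn h hx, touch_conn h hx]

/-- The two endpoints of `b` are in distinct clusters (in `F`), both meeting `W`. -/
def Dbl (F : Finset (EdgeIx d)) (W : Finset (V d)) (η : F → Bool) (b : F) : Prop :=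
  (∃ x ∈ W, Conn (ext F η) x b.1.1) ∧ (∃ y ∈ W, Conn (ext F η) y (tip b.1)) ∧
    ¬ Conn (ext F η) b.1.1 (tip b.1)

/-- A representative of each open cluster. -/
def rep (ω : Config d) (x : V d) : V d :=
  Quotient.out (s := ⟨Conn ω, ⟨Conn.refl ω, Conn.symm, Conn.trans⟩⟩) (Quotient.mk _ x)

lemma rep_conn (ω : Config d) (x : V d) : Conn ω (rep ω x) x :=
  Quotient.mk_out (s := ⟨Conn ω, ⟨Conn.refl ω, Conn.symm, Conn.trans⟩⟩) x

lemma rep_eq_iff (ω : Config d) (x y : V d) : rep ω x = rep ω y ↔ Conn ω x y := by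
  constructor
  · intro h
    have := rep_conn ω x
    rw [h] at this
    exact this.symm.trans (rep_conn ω y)
  · intro h
    unfold rep
    congr 1
    exact Quotient.sound (s := ⟨Conn ω, ⟨Conn.refl ω, Conn.symm, Conn.trans⟩⟩) h

lemma rep_rep (ω : Config d) (x : V d) : rep ω (rep ω x) = rep ω x :=
  (rep_eq_iff _ _ _).2 (rep_conn _ _)

lemma touch_congr (F : Finset (EdgeIx d)) (η : F → Bool) {x y : V d}
    (h : Conn (ext F η) x y) : touch F {x} η = touch F {y} η := by
  ext b
  simp only [touch, Finset.mem_filter, Finset.mem_univ, true_and, Finset.mem_singleton,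
    exists_eq_left]
  exact ⟨fun hh => hh.imp h.symm.trans h.symm.trans, fun hh => hh.imp h.trans h.trans⟩

open Classical in
/-- Set of cluster representatives of `W`. -/
def reps (F : Finset (EdgeIx d)) (W : Finset (V d)) (η : F → Bool) : Finset (V d) :=
  W.image (rep (ext F η))

open Classical in
lemma reps_filter (F : Finset (EdgeIx d)) (W : Finset (V d)) (η : F → Bool) (b : F) :
    (reps F W η).filter (fun x => b ∈ touch F {x} η) =
      reps F W η ∩ {rep (ext F η) b.1.1, rep (ext F η) (tip b.1)} := by
  ext x
  simp only [Finset.mem_filter, Finset.mem_inter, Finset.mem_insert, Finset.mem_singleton]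
  refine and_congr_right fun hx => ?_
  have hxx : rep (ext F η) x = x := by
    simp only [reps, Finset.mem_image] at hx
    obtain ⟨w, _, rfl⟩ := hx
    exact rep_rep _ _
  simp only [touch, Finset.mem_filter, Finset.mem_univ, true_and, Finset.mem_singleton,
    exists_eq_left]
  rw [← rep_eq_iff, ← rep_eq_iff, hxx]

lemma mem_reps (F : Finset (EdgeIx d)) (W : Finset (V d)) (η : F → Bool) (y : V d) :
    rep (ext F η) y ∈ reps F W η ↔ ∃ x ∈ W, Conn (ext F η) x y := by
  simp only [reps, Finset.mem_image, rep_eq_iff]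

lemma sc_abs {p : ℝ} (hp0 : 0 < p) (hp1 : p < 1) (t : Bool) :
    |sc p t| ≤ p⁻¹ + (1 - p)⁻¹ := by
  have h1 : 0 < p⁻¹ := inv_pos.2 hp0
  have h2 : 0 < (1 - p)⁻¹ := inv_pos.2 (by linarith)
  cases t
  · simp only [sc, Bool.false_eq_true, if_false, abs_of_pos h2]; linarith
  · simp only [sc, if_true, abs_neg, abs_of_pos h1]; linarith

open Classical in
lemma counting {p : ℝ} (hp0 : 0 < p) (hp1 : p < 1) (F : Finset (EdgeIx d)) (W : Finset (V d))
    (η : F → Bool) :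
    ((Finset.univ.filter fun b => Dbl F W η b).card : ℝ) ≤
      (∑ x ∈ reps F W η, ∑ b ∈ touch F {x} η, sc p (η b)) - ∑ b ∈ touch F W η, sc p (η b) := by
  have h1 : (∑ x ∈ reps F W η, ∑ b ∈ touch F {x} η, sc p (η b)) =
      ∑ b : F, ((reps F W η ∩ {rep (ext F η) b.1.1, rep (ext F η) (tip b.1)}).card : ℝ)
        * sc p (η b) := by
    have : ∀ x, ∑ b ∈ touch F {x} η, sc p (η b) =
        ∑ b : F, if b ∈ touch F {x} η then sc p (η b) else 0 := by
      intro x; rw [Finset.sum_ite_mem, Finset.univ_inter]; try simp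
    simp_rw [this]
    rw [Finset.sum_comm]
    refine Finset.sum_congr rfl fun b _ => ?_
    rw [← reps_filter, ← Finset.sum_filter, Finset.sum_const, nsmul_eq_mul]
  have h2 : ∑ b ∈ touch F W η, sc p (η b) =
      ∑ b : F, if b ∈ touch F W η then sc p (η b) else 0 := by
    rw [Finset.sum_ite_mem, Finset.univ_inter]; try simp
  have h3 : ((Finset.univ.filter fun b => Dbl F W η b).card : ℝ) =
      ∑ b : F, if Dbl F W η b then (1 : ℝ) else 0 := by
    simp
  rw [h1, h2, h3, ← Finset.sum_sub_distrib]
  refine Finset.sum_le_sum fun b _ => ?_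
  have hscf : (1 : ℝ) ≤ sc p false := by
    simp only [sc, Bool.false_eq_true, if_false]
    exact (one_le_inv₀ (by linarith)).2 (by linarith)
  have hmem : b ∈ touch F W η ↔ rep (ext F η) b.1.1 ∈ reps F W η ∨
      rep (ext F η) (tip b.1) ∈ reps F W η := by
    rw [mem_reps, mem_reps]
    simp only [touch, Finset.mem_filter, Finset.mem_univ, true_and]
    constructor
    · rintro ⟨x, hx, h | h⟩
      · exact Or.inl ⟨x, hx, h⟩
      · exact Or.inr ⟨x, hx, h⟩
    · rintro (⟨x, hx, h⟩ | ⟨x, hx, h⟩)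
      · exact ⟨x, hx, Or.inl h⟩
      · exact ⟨x, hx, Or.inr h⟩
  have hdbl : Dbl F W η b ↔ rep (ext F η) b.1.1 ∈ reps F W η ∧
      rep (ext F η) (tip b.1) ∈ reps F W η ∧ rep (ext F η) b.1.1 ≠ rep (ext F η) (tip b.1) := by
    rw [mem_reps, mem_reps, Ne, rep_eq_iff]
    rfl
  have hopen : η b = true → rep (ext F η) b.1.1 = rep (ext F η) (tip b.1) := by
    intro hb
    rw [rep_eq_iff]
    refine Relation.ReflTransGen.single ⟨b.1.2, Or.inl ⟨rfl, ?_⟩⟩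
    simp [ext, hb]
  rw [if_congr hdbl rfl rfl, if_congr hmem rfl rfl]
  generalize rep (ext F η) b.1.1 = u at *
  generalize rep (ext F η) (tip b.1) = v at *
  generalize reps F W η = R at *
  by_cases huv : u = v
  · subst huv
    by_cases hu : u ∈ R
    · simp [hu]
    · simp [hu]
  · have hf : η b = false := by
      by_contra h
      exact huv (hopen (by simpa using h))
    rw [hf]
    by_cases hu : u ∈ R <;> by_cases hv : v ∈ R
    · have : R ∩ {u, v} = {u, v} := by
        rw [Finset.inter_eq_right]; intro z; simp; rintro (rfl | rfl) <;> assumption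
      rw [this, Finset.card_pair huv]
      simp [hu, hv, huv]; linarith
    · have : R ∩ {u, v} = {u} := by
        ext z; simp; grind
      rw [this]; simp [hu, hv]
    · have : R ∩ {u, v} = {v} := by
        ext z; simp; grind
      rw [this]; simp [hu, hv]
    · have : R ∩ {u, v} = ∅ := by
        ext z; simp; grind
      rw [this]; simp [hu, hv]

open Classical in
lemma reps_card (F : Finset (EdgeIx d)) (W : Finset (V d)) (η : F → Bool) :
    ∑ x ∈ reps F W η, ((touch F {x} η).card : ℝ) ≤ 2 * F.card := by
  have h1 : (∑ x ∈ reps F W η, ((touch F {x} η).card : ℝ)) =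
      ∑ b : F, ((reps F W η ∩ {rep (ext F η) b.1.1, rep (ext F η) (tip b.1)}).card : ℝ) := by
    have : ∀ x, ((touch F {x} η).card : ℝ) =
        ∑ b : F, if b ∈ touch F {x} η then (1 : ℝ) else 0 := by
      intro x; rw [Finset.sum_ite_mem, Finset.univ_inter]; try simp
    simp_rw [this]
    rw [Finset.sum_comm]
    refine Finset.sum_congr rfl fun b _ => ?_
    rw [← reps_filter, ← Finset.sum_filter, Finset.sum_const, nsmul_eq_mul, mul_one]
  rw [h1]
  have : ∀ b ∈ (Finset.univ : Finset F),
      ((reps F W η ∩ {rep (ext F η) b.1.1, rep (ext F η) (tip b.1)}).card : ℝ) ≤ 2 := by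
    intro b _
    have := (Finset.card_le_card (Finset.inter_subset_right
      (s₁ := reps F W η) (s₂ := {rep (ext F η) b.1.1, rep (ext F η) (tip b.1)}))).trans
      Finset.card_le_two
    exact_mod_cast this
  refine (Finset.sum_le_sum this).trans ?_
  simp [mul_comm]

open Classical in
theorem double_bound {p : ℝ} (hp0 : 0 < p) (hp1 : p < 1) (F : Finset (EdgeIx d))
    (W : Finset (V d)) {δ : ℝ} (hδ : 0 < δ) (hδ2 : δ * (p⁻¹ + (1 - p)⁻¹) ≤ 1 / 2) :
    δ * ∑ η : F → Bool, bw p η * ((Finset.univ.filter fun b => Dbl F W η b).card : ℝ) ≤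
      6 * (δ * (p⁻¹ + (1 - p)⁻¹)) ^ 2 * F.card + W.card + 1 := by
  set K := p⁻¹ + (1 - p)⁻¹ with hK
  have hsmall : ∀ t, |δ * sc p t| ≤ 1 / 2 := by
    intro t
    rw [abs_mul, abs_of_pos hδ]
    exact (mul_le_mul_of_nonneg_left (sc_abs hp0 hp1 t) hδ.le).trans hδ2
  have hsq : ∀ t, 2 * (δ * sc p t) ^ 2 ≤ 2 * (δ * K) ^ 2 := by
    intro t
    have : |δ * sc p t| ≤ δ * K := by
      rw [abs_mul, abs_of_pos hδ]
      exact mul_le_mul_of_nonneg_left (sc_abs hp0 hp1 t) hδ.le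
    have := sq_le_sq' (by linarith [(abs_le.1 this).1]) (abs_le.1 this).2
    linarith
  have hpt : ∀ η : F → Bool,
      δ * ((Finset.univ.filter fun b => Dbl F W η b).card : ℝ) ≤
        6 * (δ * K) ^ 2 * F.card + ∑ x ∈ W, ∏ b ∈ touch F {x} η, (1 + δ * sc p (η b))
          + ∏ b ∈ touch F W η, (1 + (-δ) * sc p (η b)) := by
    intro η
    have h1 : ∀ x, δ * ∑ b ∈ touch F {x} η, sc p (η b) ≤
        2 * (δ * K) ^ 2 * (touch F {x} η).card +
          ∏ b ∈ touch F {x} η, (1 + δ * sc p (η b)) := by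
      intro x
      rw [Finset.mul_sum]
      exact lin_le_prod _ (fun b => δ * sc p (η b)) _ (fun b _ => hsmall _) (fun b _ => hsq _)
    have h2 : (-δ) * ∑ b ∈ touch F W η, sc p (η b) ≤
        2 * (δ * K) ^ 2 * (touch F W η).card +
          ∏ b ∈ touch F W η, (1 + (-δ) * sc p (η b)) := by
      rw [Finset.mul_sum]
      refine lin_le_prod _ (fun b => (-δ) * sc p (η b)) _ (fun b _ => ?_) (fun b _ => ?_)
      · rw [neg_mul, abs_neg]; exact hsmall _
      · rw [neg_mul, neg_sq]; exact hsq _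
    have h3 : ((touch F W η).card : ℝ) ≤ F.card := by
      have := Finset.card_le_univ (touch F W η)
      rw [Fintype.card_coe] at this
      exact_mod_cast this
    have h4 : ∑ x ∈ reps F W η, ∏ b ∈ touch F {x} η, (1 + δ * sc p (η b)) ≤
        ∑ x ∈ W, ∏ b ∈ touch F {x} η, (1 + δ * sc p (η b)) := by
      have hnn : ∀ x, 0 ≤ ∏ b ∈ touch F {x} η, (1 + δ * sc p (η b)) := fun x =>
        Finset.prod_nonneg fun b _ => by linarith [(abs_le.1 (hsmall (η b))).1]
      have := Finset.sum_image_le_of_nonneg (s := W) (g := rep (ext F η))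
        (f := fun x => ∏ b ∈ touch F {x} η, (1 + δ * sc p (η b))) (fun x _ => hnn _)
      refine this.trans (le_of_eq ?_)
      refine Finset.sum_congr rfl fun x _ => ?_
      rw [touch_congr F η (rep_conn (ext F η) x)]
    have h5 := mul_le_mul_of_nonneg_left (counting hp0 hp1 F W η) hδ.le
    have h6 := Finset.sum_le_sum (s := reps F W η) (fun x _ => h1 x)
    rw [← Finset.mul_sum, Finset.sum_add_distrib, ← Finset.mul_sum] at h6
    have h7 := mul_le_mul_of_nonneg_left (reps_card F W η)
      (by positivity : 0 ≤ 2 * (δ * K) ^ 2)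
    have h8 := mul_le_mul_of_nonneg_left h3 (by positivity : 0 ≤ 2 * (δ * K) ^ 2)
    linarith
  have hsum := Finset.sum_le_sum (s := Finset.univ) (fun (η : F → Bool) _ =>
    mul_le_mul_of_nonneg_left (hpt η) (bw_nonneg hp0 hp1 η))
  have e1 : ∑ η : F → Bool, bw p η * (6 * (δ * K) ^ 2 * F.card +
      ∑ x ∈ W, ∏ b ∈ touch F {x} η, (1 + δ * sc p (η b))
          + ∏ b ∈ touch F W η, (1 + (-δ) * sc p (η b))) = 6 * (δ * K) ^ 2 * F.card + W.card + 1 := by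
    simp_rw [mul_add]
    rw [Finset.sum_add_distrib, Finset.sum_add_distrib, ← Finset.sum_mul, bw_sum, one_mul,
      stop_exp hp0 hp1 (-δ) (touch F W) (touch_stop F W)]
    congr 2
    simp_rw [Finset.mul_sum]
    rw [Finset.sum_comm]
    simp_rw [stop_exp hp0 hp1 δ (touch F {_}) (touch_stop F {_})]
    simp
  rw [e1] at hsum
  refine le_trans (le_of_eq ?_) hsum
  rw [Finset.mul_sum]
  refine Finset.sum_congr rfl fun η _ => ?_
  ring

end Graph
end SRWPC

namespace SRWPC

section Bern
variable {d : ℕ}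

/-- Cylinder events. -/
def cyl (F : Finset (EdgeIx d)) (a : EdgeIx d → Bool) : Set (Config d) :=
  {ω | ∀ b ∈ F, ω b = a b}

lemma measurable_coord (b : EdgeIx d) (t : Bool) : MeasurableSet {ω : Config d | ω b = t} :=
  measurableSet_eq_fun (measurable_pi_apply b) measurable_const

lemma measurableSet_cyl (F : Finset (EdgeIx d)) (a : EdgeIx d → Bool) :
    MeasurableSet (cyl F a) := by
  have : cyl F a = ⋂ b ∈ F, {ω : Config d | ω b = a b} := by ext; simp [cyl]
  rw [this]
  exact F.measurableSet_biInter fun b _ => measurable_coord b _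

/-- The family of all cylinders. -/
def cyls (d : ℕ) : Set (Set (Config d)) := {s | ∃ F a, s = cyl F a}

lemma cyls_gen : (inferInstance : MeasurableSpace (Config d)) =
    MeasurableSpace.generateFrom (cyls d) := by
  apply le_antisymm
  · refine iSup_le fun b => ?_
    have : @Measurable _ _ (MeasurableSpace.generateFrom (cyls d)) _
        (fun ω : Config d => ω b) := by
      refine @measurable_to_bool _ (MeasurableSpace.generateFrom (cyls d)) _ ?_
      refine MeasurableSpace.measurableSet_generateFrom ⟨{b}, fun _ => true, ?_⟩
      ext ω; simp [cyl]
    exact this.comap_le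
  · refine MeasurableSpace.generateFrom_le ?_
    rintro s ⟨F, a, rfl⟩
    exact measurableSet_cyl F a

lemma cyls_pi : IsPiSystem (cyls d) := by
  classical
  rintro s ⟨F, a, rfl⟩ t ⟨G, a', rfl⟩ ⟨ω₀, h1, h2⟩
  refine ⟨F ∪ G, ω₀, ?_⟩
  ext ω
  simp only [cyl, Set.mem_inter_iff, Set.mem_ofPred_eq, Finset.mem_union] at *
  grind

lemma ext_cyl (μ ν : Measure (Config d)) [IsFiniteMeasure μ]
    (h : ∀ F a, μ (cyl F a) = ν (cyl F a)) : μ = ν := by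
  refine ext_of_generate_finite (cyls d) cyls_gen cyls_pi ?_ ?_
  · rintro s ⟨F, a, rfl⟩
    exact h F a
  · have := h ∅ (fun _ => true)
    simpa [cyl] using this

lemma measurable_shift (x : V d) : Measurable (shift (d := d) x) :=
  measurable_pi_lambda _ fun b => measurable_pi_apply _

lemma shift_shift (x y : V d) (ω : Config d) : shift x (shift y ω) = shift (x + y) ω := by
  ext b; simp [shift, add_assoc]

lemma shift_zero (ω : Config d) : shift 0 ω = ω := by
  ext b; simp [shift]

/-- The shift as a measurable equivalence. -/
def shiftEquiv (x : V d) : Config d ≃ᵐ Config d where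
  toFun := shift x
  invFun := shift (-x)
  left_inv ω := by rw [shift_shift]; simp [shift_zero]
  right_inv ω := by rw [shift_shift]; simp [shift_zero]
  measurable_toFun := measurable_shift x
  measurable_invFun := measurable_shift (-x)

/-- Translation of bonds. -/
def trB (x : V d) : EdgeIx d ↪ EdgeIx d :=
  ⟨fun b => (b.1 + x, b.2), fun b c h => by
    simp only [Prod.mk.injEq, add_left_inj] at h
    exact Prod.ext h.1 h.2⟩

lemma trB_apply (x : V d) (b : EdgeIx d) : trB x b = (b.1 + x, b.2) := rfl

lemma shift_preimage_cyl (x : V d) (F : Finset (EdgeIx d)) (a : EdgeIx d → Bool) :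
    shift x ⁻¹' (cyl F a) = cyl (F.map (trB x)) (shift (-x) a) := by
  ext ω
  simp only [cyl, shift, Set.mem_preimage, Set.mem_ofPred_eq, Finset.mem_map]
  constructor
  · rintro h _ ⟨c, hc, rfl⟩
    simpa [trB_apply] using h c hc
  · intro h c hc
    simpa [trB_apply] using h _ ⟨c, hc, rfl⟩

variable {p : ℝ} {P : Measure (Config d)}

lemma bern_cyl (hP : IsBernoulli d p P) (F : Finset (EdgeIx d)) (a : EdgeIx d → Bool) :
    P (cyl F a) = ∏ b ∈ F, ENNReal.ofReal (if a b then p else 1 - p) := hP.2 F a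

lemma bern_shift_cyl (hP : IsBernoulli d p P) (x : V d) (F : Finset (EdgeIx d))
    (a : EdgeIx d → Bool) :
    P (cyl (F.map (trB x)) (shift (-x) a)) = P (cyl F a) := by
  rw [bern_cyl hP, bern_cyl hP, Finset.prod_map]
  refine Finset.prod_congr rfl fun b _ => ?_
  simp [shift, trB_apply]

lemma bern_mp (hP : IsBernoulli d p P) (x : V d) : MeasurePreserving (shift x) P P := by
  have := hP.1
  refine ⟨measurable_shift x, ?_⟩
  symm
  refine ext_cyl _ _ fun F a => ?_
  rw [Measure.map_apply (measurable_shift x) (measurableSet_cyl F a), shift_preimage_cyl,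
    bern_shift_cyl hP]

lemma bern_shift (hP : IsBernoulli d p P) (x : V d) (s : Set (Config d)) :
    P (shift x ⁻¹' s) = P s :=
  MeasurePreserving.measure_preimage_equiv (f := shiftEquiv x) (bern_mp hP x) s

/-- Insertion tolerance. -/
lemma bern_insert (hP : IsBernoulli d p P) (hp0 : 0 < p) (b : EdgeIx d)
    {N : Set (Config d)} (hN : MeasurableSet N) (h0 : P N = 0) :
    P {ω | Function.update ω b true ∈ N} = 0 := by
  classical
  have := hP.1
  have hm : Measurable (fun ω : Config d => Function.update ω b true) := by
    refine measurable_pi_lambda _ fun c => ?_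
    by_cases hc : c = b
    · subst hc; simp
    · simp only [Function.update_of_ne hc]; exact measurable_pi_apply c
  have key : P.restrict {ω | ω b = true} =
      ENNReal.ofReal p • P.map (fun ω : Config d => Function.update ω b true) := by
    refine ext_cyl _ _ fun F a => ?_
    rw [Measure.restrict_apply (measurableSet_cyl F a), Measure.smul_apply,
      Measure.map_apply hm (measurableSet_cyl F a), smul_eq_mul]
    by_cases hab : b ∈ F ∧ a b = false
    · have e1 : cyl F a ∩ {ω | ω b = true} = ∅ := by
        ext ω
        simp only [cyl, Set.mem_inter_iff, Set.mem_ofPred_eq, Set.mem_empty_iff_false, iff_false,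
          not_and]
        intro h hb
        have := h b hab.1
        simp_all
      have e2 : (fun ω : Config d => Function.update ω b true) ⁻¹' cyl F a = ∅ := by
        ext ω
        simp only [cyl, Set.mem_preimage, Set.mem_ofPred_eq, Set.mem_empty_iff_false, iff_false]
        intro h
        have := h b hab.1
        simp_all
      rw [e1, e2]; simp
    · have hab' : b ∈ F → a b = true := by
        intro h; by_contra h'; exact hab ⟨h, by simpa using h'⟩
      have e1 : cyl F a ∩ {ω | ω b = true} =
          cyl (insert b (F.erase b)) (Function.update a b true) := by
        ext ω
        simp only [cyl, Set.mem_inter_iff, Set.mem_ofPred_eq, Finset.mem_insert, Finset.mem_erase,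
          Function.update_apply]
        grind
      have e2 : (fun ω : Config d => Function.update ω b true) ⁻¹' cyl F a =
          cyl (F.erase b) (Function.update a b true) := by
        ext ω
        simp only [cyl, Set.mem_preimage, Set.mem_ofPred_eq, Finset.mem_erase,
          Function.update_apply]
        grind
      rw [e1, e2, bern_cyl hP, bern_cyl hP, Finset.prod_insert (Finset.notMem_erase b F)]
      simp
  have h1 : P.restrict {ω | ω b = true} N = 0 :=
    le_antisymm ((Measure.restrict_le_self N).trans h0.le) bot_le
  rw [key, Measure.smul_apply, smul_eq_mul, mul_eq_zero, Measure.map_apply hm hN] at h1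
  rcases h1 with h1 | h1
  · simp at h1; linarith
  · exact h1

lemma mix_cyl (hP : IsBernoulli d p P) (u : V d) (hu : u ≠ 0) (F G : Finset (EdgeIx d))
    (a a' : EdgeIx d → Bool) :
    ∀ᶠ n : ℕ in atTop, P (cyl F a ∩ shift ((n : ℤ) • u) ⁻¹' cyl G a') =
      P (cyl F a) * P (cyl G a') := by
  classical
  obtain ⟨i, hi⟩ : ∃ i, u i ≠ 0 := by
    by_contra h
    push Not at h
    exact hu (funext h)
  obtain ⟨B, hB⟩ : ∃ B : ℕ, ∀ b ∈ F, ∀ c ∈ G, |b.1 i - c.1 i| < B := by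
    refine ⟨∑ b ∈ F, ∑ c ∈ G, ((b.1 i - c.1 i).natAbs + 1), fun b hb c hc => ?_⟩
    have h1 : (b.1 i - c.1 i).natAbs + 1 ≤ ∑ c ∈ G, ((b.1 i - c.1 i).natAbs + 1) :=
      Finset.single_le_sum (f := fun c : EdgeIx d => (b.1 i - c.1 i).natAbs + 1)
        (fun _ _ => Nat.zero_le _) hc
    have h2 : ∑ c ∈ G, ((b.1 i - c.1 i).natAbs + 1) ≤
        ∑ b ∈ F, ∑ c ∈ G, ((b.1 i - c.1 i).natAbs + 1) :=
      Finset.single_le_sum (f := fun b : EdgeIx d => ∑ c ∈ G, ((b.1 i - c.1 i).natAbs + 1))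
        (fun _ _ => Nat.zero_le _) hb
    have h3 := h1.trans h2
    rw [Int.abs_eq_natAbs]
    exact_mod_cast h3
  filter_upwards [eventually_ge_atTop B] with n hn
  rw [shift_preimage_cyl, ← bern_shift_cyl hP ((n : ℤ) • u) G a']
  set G' := G.map (trB ((n : ℤ) • u))
  set a'' := shift (-((n : ℤ) • u)) a'
  have hdis : Disjoint F G' := by
    rw [Finset.disjoint_left]
    intro b hb hb'
    simp only [G', Finset.mem_map] at hb'
    obtain ⟨c, hc, rfl⟩ := hb'
    have := hB _ hb c hc
    simp only [trB_apply, Pi.add_apply, Pi.smul_apply, smul_eq_mul,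
      add_sub_cancel_left, abs_mul, Nat.abs_cast] at this
    have h1 : 1 ≤ |u i| := Int.one_le_abs hi
    have h2 : (B : ℤ) ≤ n := by exact_mod_cast hn
    nlinarith
  have e : cyl F a ∩ cyl G' a'' = cyl (F ∪ G') (fun b => if b ∈ F then a b else a'' b) := by
    ext ω
    have := Finset.disjoint_left.1 hdis
    simp only [cyl, Set.mem_inter_iff, Set.mem_ofPred_eq, Finset.mem_union]
    grind
  rw [e, bern_cyl hP, bern_cyl hP, bern_cyl hP, Finset.prod_union hdis]
  congr 1
  · refine Finset.prod_congr rfl fun b hb => ?_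
    simp [hb]
  · refine Finset.prod_congr rfl fun b hb => ?_
    simp [Finset.disjoint_right.1 hdis hb]

lemma mix (hP : IsBernoulli d p P) (u : V d) (hu : u ≠ 0) (F : Finset (EdgeIx d))
    (a : EdgeIx d → Bool) (B : Set (Config d)) (hB : MeasurableSet B) :
    Tendsto (fun n : ℕ => P.real (cyl F a ∩ shift ((n : ℤ) • u) ⁻¹' B)) atTop
      (𝓝 (P.real (cyl F a) * P.real B)) := by
  have := hP.1
  have hA := measurableSet_cyl F a
  induction B, hB using MeasurableSpace.induction_on_inter cyls_gen cyls_pi with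
  | empty => simp
  | basic t ht =>
    obtain ⟨G, a', rfl⟩ := ht
    refine tendsto_const_nhds.congr' ?_
    filter_upwards [mix_cyl hP u hu F G a a'] with n hn
    rw [measureReal_def, measureReal_def, measureReal_def, hn, ENNReal.toReal_mul]
  | compl t htm ih =>
    have e : ∀ n : ℕ, P.real (cyl F a ∩ shift ((n : ℤ) • u) ⁻¹' tᶜ) =
        P.real (cyl F a) - P.real (cyl F a ∩ shift ((n : ℤ) • u) ⁻¹' t) := by
      intro n
      have := measureReal_inter_add_sdiff (μ := P) (s := cyl F a)
        (measurable_shift ((n : ℤ) • u) htm)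
      rw [← this, Set.preimage_compl, Set.sdiff_eq]
      ring
    simp_rw [e]
    have e2 : P.real (cyl F a) * P.real tᶜ =
        P.real (cyl F a) - P.real (cyl F a) * P.real t := by
      rw [probReal_compl_eq_one_sub htm]; ring
    rw [e2]
    exact tendsto_const_nhds.sub ih
  | iUnion f hd hm ih =>
    have e : ∀ n : ℕ, P.real (cyl F a ∩ shift ((n : ℤ) • u) ⁻¹' (⋃ i, f i)) =
        ∑' i, P.real (cyl F a ∩ shift ((n : ℤ) • u) ⁻¹' (f i)) := by
      intro n
      rw [Set.preimage_iUnion, Set.inter_iUnion]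
      simp only [measureReal_def]
      rw [measure_iUnion, ENNReal.tsum_toReal_eq]
      · exact fun i => measure_ne_top _ _
      · intro i j hij
        exact ((hd hij).preimage _).mono Set.inter_subset_right Set.inter_subset_right
      · exact fun i => hA.inter (measurable_shift _ (hm i))
    have e2 : P.real (cyl F a) * P.real (⋃ i, f i) = ∑' i, P.real (cyl F a) * P.real (f i) := by
      rw [tsum_mul_left]
      congr 1
      simp only [measureReal_def]
      rw [measure_iUnion hd hm, ENNReal.tsum_toReal_eq]
      exact fun i => measure_ne_top _ _
    simp_rw [e]
    rw [e2]
    refine tendsto_tsum_of_dominated_convergence (bound := fun i => P.real (f i)) ?_ ih ?_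
    · refine ENNReal.summable_toReal ?_
      rw [← measure_iUnion hd hm]
      exact measure_ne_top _ _
    · refine Eventually.of_forall fun n i => ?_
      rw [Real.norm_of_nonneg measureReal_nonneg]
      simp only [measureReal_def]
      rw [← bern_shift hP ((n : ℤ) • u) (f i)]
      exact ENNReal.toReal_mono (measure_ne_top _ _) (measure_mono Set.inter_subset_right)

/-- Ergodicity of Bernoulli percolation under translations. -/
lemma bern_erg (hP : IsBernoulli d p P) (hd : 0 < d) (E : Set (Config d))
    (hE : MeasurableSet E) (hinv : ∀ x, shift x ⁻¹' E = E) : P E = 0 ∨ P Eᶜ = 0 := by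
  have := hP.1
  have hu : unitVec d ⟨0, hd⟩ ≠ 0 := by
    intro h
    have := congrFun h ⟨0, hd⟩
    simp [unitVec] at this
  have h1 : ∀ F a, P.real (cyl F a ∩ E) = P.real (cyl F a) * P.real E := by
    intro F a
    have := mix hP _ hu F a E hE
    simp_rw [hinv] at this
    exact tendsto_nhds_unique tendsto_const_nhds this
  have h2 : P.restrict E = P E • P := by
    refine ext_cyl _ _ fun F a => ?_
    rw [Measure.restrict_apply (measurableSet_cyl F a), Measure.smul_apply, smul_eq_mul, mul_comm]
    have := h1 F a
    simp only [measureReal_def] at this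
    rw [← ENNReal.toReal_mul] at this
    exact (ENNReal.toReal_eq_toReal_iff' (measure_ne_top _ _)
      (ENNReal.mul_ne_top (measure_ne_top _ _) (measure_ne_top _ _))).1 this
  have h3 := congrArg (fun μ => μ Eᶜ) h2
  simp only [Measure.restrict_apply hE.compl, Measure.smul_apply, smul_eq_mul,
    Set.compl_inter_self, measure_empty] at h3
  exact mul_eq_zero.1 h3.symm

end Bern
end SRWPC

namespace SRWPC

section Uniq
variable {d : ℕ}

/-- `n`-step reachability. -/
def reach (ω : Config d) : ℕ → V d → V d → Prop
  | 0, x, y => x = y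
  | n + 1, x, y => ∃ z, reach ω n x z ∧ Adj ω z y

lemma conn_iff_reach (ω : Config d) (x y : V d) : Conn ω x y ↔ ∃ n, reach ω n x y := by
  constructor
  · intro h
    induction h with
    | refl => exact ⟨0, rfl⟩
    | tail _ h2 ih =>
      obtain ⟨n, hn⟩ := ih
      exact ⟨n + 1, _, hn, h2⟩
  · rintro ⟨n, hn⟩
    induction n generalizing y with
    | zero => rw [reach] at hn; subst hn; exact Conn.refl _ _
    | succ n ih =>
      obtain ⟨z, hz, ha⟩ := hn
      exact Relation.ReflTransGen.tail (ih z hz) ha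

lemma measurable_adj (x y : V d) : MeasurableSet {ω : Config d | Adj ω x y} := by
  unfold Adj
  refine MeasurableSet.congr (s := ⋃ i, (({ω : Config d | y = x + unitVec d i} ∩
    {ω | ω (x, i) = true}) ∪ ({ω : Config d | x = y + unitVec d i} ∩ {ω | ω (y, i) = true})))
    ?_ ?_
  · exact MeasurableSet.iUnion fun i => ((MeasurableSet.const _).inter (measurable_coord _ _)).union
      ((MeasurableSet.const _).inter (measurable_coord _ _))
  · ext ω; simp

lemma measurable_reach (n : ℕ) (x y : V d) : MeasurableSet {ω : Config d | reach ω n x y} := by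
  induction n generalizing y with
  | zero => exact MeasurableSet.const _
  | succ n ih =>
    refine MeasurableSet.congr (s := ⋃ z, ({ω : Config d | reach ω n x z} ∩
      {ω : Config d | Adj ω z y})) ?_ ?_
    · exact MeasurableSet.iUnion fun z => (ih z).inter (measurable_adj z y)
    · ext ω; simp [reach]

lemma measurable_conn (x y : V d) : MeasurableSet {ω : Config d | Conn ω x y} := by
  refine MeasurableSet.congr (s := ⋃ n, {ω : Config d | reach ω n x y}) ?_ ?_
  · exact MeasurableSet.iUnion fun n => measurable_reach n x y
  · ext ω; simp [conn_iff_reach]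

/-- `x` lies in an infinite cluster. -/
def Infc (ω : Config d) (x : V d) : Prop := {y | Conn ω x y}.Infinite

lemma infc_iff (ω : Config d) (x : V d) : Infc ω x ↔ ∀ T : Finset (V d), ∃ y, y ∉ T ∧ Conn ω x y := by
  constructor
  · intro h T
    obtain ⟨y, hy, hy'⟩ := h.exists_notMem_finset T
    exact ⟨y, hy', hy⟩
  · intro h hf
    obtain ⟨y, hy, hy'⟩ := h hf.toFinset
    exact hy (by simpa using hy')

lemma measurable_infc (x : V d) : MeasurableSet {ω : Config d | Infc ω x} := by
  refine MeasurableSet.congr (s := ⋂ T : Finset (V d), ⋃ y : V d, ({ω : Config d | y ∉ T} ∩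
    {ω : Config d | Conn ω x y})) ?_ ?_
  · exact MeasurableSet.iInter fun T => MeasurableSet.iUnion fun y =>
      (MeasurableSet.const _).inter (measurable_conn x y)
  · ext ω; simp [infc_iff]

lemma Infc.conn {ω : Config d} {x y : V d} (h : Infc ω x) (hc : Conn ω x y) : Infc ω y :=
  h.mono fun _ hz => hc.symm.trans hz

lemma Infc.mono {ω ω' : Config d} (hle : ∀ b, ω b = true → ω' b = true) {x : V d}
    (h : Infc ω x) : Infc ω' x := Set.Infinite.mono (fun _ hz => Conn.mono hle hz) h

lemma adj_shift (v : V d) (ω : Config d) (x y : V d) :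
    Adj (shift v ω) x y ↔ Adj ω (x + v) (y + v) := by
  unfold Adj shift
  refine exists_congr fun i => ?_
  rw [add_right_comm x v, add_right_comm y v, add_left_inj, add_left_inj]

lemma conn_shift_aux {v : V d} {ω : Config d} {x y : V d} (h : Conn (shift v ω) x y) :
    Conn ω (x + v) (y + v) := by
  induction h with
  | refl => exact Conn.refl _ _
  | tail _ h2 ih => exact Relation.ReflTransGen.tail ih ((adj_shift _ _ _ _).1 h2)

lemma conn_shift (v : V d) (ω : Config d) (x y : V d) :
    Conn (shift v ω) x y ↔ Conn ω (x + v) (y + v) := by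
  refine ⟨conn_shift_aux, fun h => ?_⟩
  have : Conn (shift (-v) (shift v ω)) (x + v) (y + v) := by
    rw [shift_shift]; simpa [shift_zero] using h
  simpa using conn_shift_aux this

lemma infc_shift (v : V d) (ω : Config d) (x : V d) :
    Infc (shift v ω) x ↔ Infc ω (x + v) := by
  unfold Infc
  have : {y | Conn ω (x + v) y} = (fun y => y + v) '' {y | Conn (shift v ω) x y} := by
    ext y
    simp only [Set.mem_ofPred_eq, Set.mem_image, conn_shift]
    constructor
    · intro h
      exact ⟨y - v, by simpa using h, by simp⟩
    · rintro ⟨z, hz, rfl⟩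
      exact hz
  rw [this, Set.infinite_image_iff]
  exact (add_left_injective v).injOn

/-- `x` and `y` are in distinct infinite clusters. -/
def NN (x y : V d) : Set (Config d) := {ω | Infc ω x ∧ Infc ω y ∧ ¬ Conn ω x y}

lemma measurable_NN (x y : V d) : MeasurableSet (NN x y) :=
  (measurable_infc x).inter ((measurable_infc y).inter (measurable_conn x y).compl)

lemma NN_shift (v x y : V d) : shift v ⁻¹' (NN x y) = NN (x + v) (y + v) := by
  ext ω
  simp [NN, infc_shift, conn_shift]

/-- Edges of the box. -/
def bF (d n : ℕ) : Finset (EdgeIx d) :=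
  (Fintype.piFinset fun _ : Fin d => Finset.Ico (0 : ℤ) n) ×ˢ Finset.univ

/-- Vertices of the closed box. -/
def bV (d n : ℕ) : Finset (V d) := Fintype.piFinset fun _ : Fin d => Finset.Icc (0 : ℤ) n

/-- Boundary vertices of the box. -/
def bW (d n : ℕ) : Finset (V d) := bV d n \ Fintype.piFinset fun _ : Fin d => Finset.Ioo (0 : ℤ) n

lemma bF_card (d n : ℕ) : (bF d n).card = n ^ d * d := by
  simp [bF, Fintype.card_piFinset]

lemma bW_card (d n : ℕ) (hn : 1 ≤ n) : ((bW d n).card : ℝ) = ((n : ℝ) + 1) ^ d - ((n : ℝ) - 1) ^ d := by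
  have hsub : (Fintype.piFinset fun _ : Fin d => Finset.Ioo (0 : ℤ) n) ⊆ bV d n :=
    Fintype.piFinset_subset _ _ fun _ => Finset.Ioo_subset_Icc_self
  rw [bW, Finset.card_sdiff_of_subset hsub, Nat.cast_sub (Finset.card_le_card hsub)]
  simp only [bV, Fintype.card_piFinset, Int.card_Icc, Int.card_Ioo, Finset.prod_const,
    Finset.card_univ, Fintype.card_fin]
  have h1 : ((n : ℤ) + 1 - 0).toNat = n + 1 := by omega
  have h2 : ((n : ℤ) - 0 - 1).toNat = n - 1 := by omega
  rw [h1, h2]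
  push_cast [hn]
  ring

/-- Restriction to finitely many bonds. -/
def restr (F : Finset (EdgeIx d)) (ω : Config d) : F → Bool := fun b => ω b.1

lemma ext_restr_le (F : Finset (EdgeIx d)) (ω : Config d) (b : EdgeIx d)
    (h : ext F (restr F ω) b = true) : ω b = true := by
  by_cases hb : b ∈ F
  · simpa [ext, hb, restr] using h
  · simp [ext, hb] at h

lemma ext_restr_mem (F : Finset (EdgeIx d)) (ω : Config d) (b : EdgeIx d) (hb : b ∈ F)
    (h : ω b = true) : ext F (restr F ω) b = true := by
  simpa [ext, hb, restr] using h

lemma reach_bdry (n : ℕ) (ω : Config d) (x : V d) (hx : x ∈ bV d n) (hinf : Infc ω x) :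
    ∃ y ∈ bW d n, Conn (ext (bF d n) (restr (bF d n) ω)) y x := by
  by_contra hcon
  push Not at hcon
  apply hinf
  refine Set.Finite.subset (bV d n).finite_toSet ?_
  intro y hy
  suffices h : Conn (ext (bF d n) (restr (bF d n) ω)) x y ∧ y ∈ bV d n from h.2
  have hy' : Conn ω x y := hy
  clear hy
  induction hy' with
  | refl => exact ⟨Conn.refl _ _, hx⟩
  | @tail y z _ ha ih =>
    obtain ⟨hc, hyV⟩ := ih
    have hyI : ∀ j, 0 < y j ∧ y j < n := by
      by_contra hh
      refine hcon y ?_ hc.symm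
      rw [bW, Finset.mem_sdiff]
      refine ⟨hyV, fun h => hh ?_⟩
      simpa [Fintype.mem_piFinset] using h
    obtain ⟨i, ⟨h1, h2⟩ | ⟨h1, h2⟩⟩ := ha
    · have hb : (y, i) ∈ bF d n := by
        simp only [bF, Finset.mem_product, Fintype.mem_piFinset, Finset.mem_Ico, Finset.mem_univ,
          and_true]
        intro j; have := hyI j; omega
      refine ⟨Relation.ReflTransGen.tail hc
        ⟨i, Or.inl ⟨h1, ext_restr_mem _ _ _ hb h2⟩⟩, ?_⟩
      simp only [bV, Fintype.mem_piFinset, Finset.mem_Icc]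
      intro j
      have := hyI j
      have e : z j = y j + (if j = i then 1 else 0) := by rw [h1]; rfl
      split_ifs at e <;> omega
    · have hz : ∀ j, 0 ≤ z j ∧ z j < n := by
        intro j
        have := hyI j
        have e : y j = z j + (if j = i then 1 else 0) := by rw [h1]; rfl
        split_ifs at e <;> omega
      have hb : (z, i) ∈ bF d n := by
        simp only [bF, Finset.mem_product, Fintype.mem_piFinset, Finset.mem_Ico, Finset.mem_univ,
          and_true]
        exact hz
      refine ⟨Relation.ReflTransGen.tail hc
        ⟨i, Or.inr ⟨h1, ext_restr_mem _ _ _ hb h2⟩⟩, ?_⟩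
      simp only [bV, Fintype.mem_piFinset, Finset.mem_Icc]
      intro j; have := hz j; omega

lemma NN_subset (n : ℕ) (b : bF d n) (ω : Config d) (h : ω ∈ NN b.1.1 (tip b.1)) :
    Dbl (bF d n) (bW d n) (restr (bF d n) ω) b := by
  obtain ⟨h1, h2, h3⟩ := h
  have hb := b.2
  simp only [bF, Finset.mem_product, Fintype.mem_piFinset, Finset.mem_Ico, Finset.mem_univ,
          and_true] at hb
  refine ⟨reach_bdry n ω _ ?_ h1, reach_bdry n ω _ ?_ h2,
    fun hc => h3 (hc.mono (ext_restr_le _ _))⟩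
  · simp only [bV, Fintype.mem_piFinset, Finset.mem_Icc]
    intro j; have := hb j; omega
  · simp only [bV, Fintype.mem_piFinset, Finset.mem_Icc]
    intro j
    have := hb j
    have e : tip b.1 j = b.1.1 j + (if j = b.1.2 then 1 else 0) := rfl
    split_ifs at e <;> omega

variable {p : ℝ} {P : Measure (Config d)}

open Classical in
lemma bern_restr (hP : IsBernoulli d p P) (hp0 : 0 < p) (hp1 : p < 1) (F : Finset (EdgeIx d))
    (A : (F → Bool) → Prop) :
    P.real {ω | A (restr F ω)} = ∑ η : F → Bool, bw p η * (if A η then 1 else 0) := by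
  have := hP.1
  have hm : Measurable (restr F) := measurable_pi_lambda _ fun b => measurable_pi_apply b.1
  have h1 : ∀ η : F → Bool, P.real (restr F ⁻¹' {η}) = bw p η := by
    intro η
    have e : restr F ⁻¹' {η} = cyl F (ext F η) := by
      ext ω
      simp only [Set.mem_preimage, Set.mem_singleton_iff, cyl, Set.mem_ofPred_eq]
      constructor
      · rintro rfl b hb
        simp [ext, hb, restr]
      · intro h
        ext b
        rw [restr, h b.1 b.2]
        simp [ext]
    rw [e, measureReal_def, bern_cyl hP, ENNReal.toReal_prod, bw,
      ← Finset.prod_coe_sort]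
    refine Finset.prod_congr rfl fun b _ => ?_
    rw [ENNReal.toReal_ofReal (by split_ifs <;> linarith)]
    simp [ext]
  have h2 : {ω | A (restr F ω)} = restr F ⁻¹' (Finset.univ.filter A : Finset (F → Bool)) := by
    ext ω; simp
  rw [h2, measureReal_def, ← sum_measure_preimage_singleton _
    (fun η _ => hm (measurableSet_singleton η)),
    ENNReal.toReal_sum (fun η _ => measure_ne_top _ _)]
  simp_rw [← measureReal_def, h1]
  rw [Finset.sum_filter]
  simp

lemma edge_bound (hP : IsBernoulli d p P) (hp0 : 0 < p) (hp1 : p < 1) (n : ℕ) (hn : 1 ≤ n)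
    {δ : ℝ} (hδ : 0 < δ) (hδ2 : δ * (p⁻¹ + (1 - p)⁻¹) ≤ 1 / 2) :
    δ * ((n : ℝ) ^ d * ∑ i : Fin d, P.real (NN 0 (unitVec d i))) ≤
      6 * (δ * (p⁻¹ + (1 - p)⁻¹)) ^ 2 * ((n : ℝ) ^ d * d) +
        (((n : ℝ) + 1) ^ d - ((n : ℝ) - 1) ^ d) + 1 := by
  classical
  have := hP.1
  have h1 := double_bound hp0 hp1 (bF d n) (bW d n) hδ hδ2
  rw [bW_card d n hn, bF_card] at h1
  push_cast at h1
  refine le_trans (mul_le_mul_of_nonneg_left ?_ hδ.le) h1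
  have h2 : ∀ b : EdgeIx d, P.real (NN b.1 (tip b)) = P.real (NN 0 (unitVec d b.2)) := by
    intro b
    have := NN_shift b.1 0 (unitVec d b.2)
    rw [zero_add] at this
    rw [tip, add_comm b.1, ← this, measureReal_def, measureReal_def, bern_shift hP]
  have h3 : (n : ℝ) ^ d * ∑ i : Fin d, P.real (NN 0 (unitVec d i)) =
      ∑ b ∈ bF d n, P.real (NN b.1 (tip b)) := by
    simp_rw [h2]
    rw [bF, Finset.sum_product]
    simp [Fintype.card_piFinset]
  rw [h3, ← Finset.sum_coe_sort]
  calc ∑ b : bF d n, P.real (NN b.1.1 (tip b.1))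
      ≤ ∑ b : bF d n, ∑ η : bF d n → Bool,
          bw p η * (if Dbl (bF d n) (bW d n) η b then 1 else 0) := by
        refine Finset.sum_le_sum fun b _ => ?_
        rw [← bern_restr hP hp0 hp1 (bF d n) (fun η => Dbl (bF d n) (bW d n) η b)]
        exact measureReal_mono (fun ω hω => NN_subset n b ω hω)
    _ = _ := by
        rw [Finset.sum_comm]
        refine Finset.sum_congr rfl fun η _ => ?_
        rw [← Finset.mul_sum]
        simp

lemma edge_null (hP : IsBernoulli d p P) (hd : 0 < d) (hp0 : 0 < p) (hp1 : p < 1) (i : Fin d) :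
    P (NN 0 (unitVec d i)) = 0 := by
  have := hP.1
  set K := p⁻¹ + (1 - p)⁻¹ with hK
  have hKpos : 0 < K := add_pos (inv_pos.2 hp0) (inv_pos.2 (by linarith))
  set A := ∑ i : Fin d, P.real (NN 0 (unitVec d i)) with hA
  have h1 : ∀ δ : ℝ, 0 < δ → δ * K ≤ 1 / 2 → δ * A ≤ 6 * (δ * K) ^ 2 * d := by
    intro δ hδ hδ2
    have hlim : Tendsto (fun n : ℕ => 6 * (δ * K) ^ 2 * d + ((1 + 1 / (n : ℝ)) ^ d -
        (1 - 1 / (n : ℝ)) ^ d) + (1 / (n : ℝ)) ^ d) atTop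
        (𝓝 (6 * (δ * K) ^ 2 * d + ((1 + 0) ^ d - (1 - 0) ^ d) + 0 ^ d)) := by
      have h0 : Tendsto (fun n : ℕ => 1 / (n : ℝ)) atTop (𝓝 0) :=
        tendsto_one_div_atTop_nhds_zero_nat
      exact (tendsto_const_nhds.add (((tendsto_const_nhds.add h0).pow d).sub
        ((tendsto_const_nhds.sub h0).pow d))).add (h0.pow d)
    have e : 6 * (δ * K) ^ 2 * d + (((1 : ℝ) + 0) ^ d - (1 - 0) ^ d) + 0 ^ d =
        6 * (δ * K) ^ 2 * d := by
      simp [hd.ne']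
    rw [e] at hlim
    refine ge_of_tendsto hlim ?_
    filter_upwards [eventually_ge_atTop 1] with n hn
    have hb := edge_bound hP hp0 hp1 n hn hδ hδ2
    have hnpos : (0 : ℝ) < n := by exact_mod_cast hn
    have hnd : (0 : ℝ) < (n : ℝ) ^ d := by positivity
    refine le_of_mul_le_mul_right ?_ hnd
    have e1 : (1 + 1 / (n : ℝ)) ^ d * (n : ℝ) ^ d = ((n : ℝ) + 1) ^ d := by
      rw [← mul_pow]; congr 1; field_simp
    have e2 : (1 - 1 / (n : ℝ)) ^ d * (n : ℝ) ^ d = ((n : ℝ) - 1) ^ d := by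
      rw [← mul_pow]; congr 1; field_simp
    have e3 : (1 / (n : ℝ)) ^ d * (n : ℝ) ^ d = 1 := by
      rw [← mul_pow]; simp [hnpos.ne']
    calc δ * A * (n : ℝ) ^ d = δ * ((n : ℝ) ^ d * A) := by ring
      _ ≤ _ := hb
      _ = _ := by rw [← e1, ← e2]; nlinarith [e3]
  have hA0 : A ≤ 0 := by
    have hlim : Tendsto (fun n : ℕ => (1 / ((n : ℝ) + 1)) * (3 * K * d)) atTop
        (𝓝 (0 * (3 * K * d))) :=
      tendsto_one_div_add_atTop_nhds_zero_nat.mul tendsto_const_nhds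
    rw [zero_mul] at hlim
    refine ge_of_tendsto hlim (Eventually.of_forall fun n => ?_)
    have hn1 : (0 : ℝ) < (n : ℝ) + 1 := by positivity
    have := h1 (1 / (2 * K * (n + 1))) (by positivity) (by
      have : 1 / (2 * K * ((n : ℝ) + 1)) * K = 1 / (2 * (n + 1)) := by field_simp
      rw [this]
      apply one_div_le_one_div_of_le <;> linarith)
    have e : 6 * (1 / (2 * K * ((n : ℝ) + 1)) * K) ^ 2 * d =
        (1 / (2 * K * ((n : ℝ) + 1))) * ((1 / ((n : ℝ) + 1)) * (3 * K * d)) := by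
      field_simp; ring
    rw [e] at this
    exact le_of_mul_le_mul_left this (by positivity)
  have h2 : P.real (NN 0 (unitVec d i)) ≤ A :=
    Finset.single_le_sum (f := fun i => P.real (NN 0 (unitVec d i)))
      (fun _ _ => measureReal_nonneg) (Finset.mem_univ i)
  have h3 : P.real (NN 0 (unitVec d i)) = 0 := le_antisymm (h2.trans hA0) measureReal_nonneg
  rwa [measureReal_eq_zero_iff] at h3

lemma NN_symm (x y : V d) : NN x y = NN y x := by
  ext ω
  simp only [NN, Set.mem_ofPred_eq]
  constructor <;> rintro ⟨h1, h2, h3⟩ <;> exact ⟨h2, h1, fun h => h3 h.symm⟩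

/-- Passing from `x₁` to a lattice neighbour `x₀`. -/
lemma NN_step (hP : IsBernoulli d p P) (hp0 : 0 < p) (y x₀ x₁ : V d) (b : EdgeIx d)
    (hb : (b.1 = x₀ ∧ tip b = x₁) ∨ (b.1 = x₁ ∧ tip b = x₀))
    (h0 : P (NN x₀ x₁) = 0) (h1 : P (NN x₁ y) = 0) : P (NN x₀ y) = 0 := by
  have hi := bern_insert hP hp0 b (measurable_NN x₁ y) h1
  refine measure_mono_null ?_ (measure_union_null h0 (measure_union_null h1 hi))
  rintro ω ⟨hx, hy, hc⟩
  by_cases hx1 : Infc ω x₁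
  · by_cases hc1 : Conn ω x₀ x₁
    · exact Or.inr (Or.inl ⟨hx1, hy, fun h => hc (hc1.trans h)⟩)
    · exact Or.inl ⟨hx, hx1, hc1⟩
  · refine Or.inr (Or.inr ?_)
    have hle : ∀ c, ω c = true → Function.update ω b true c = true := by
      intro c hc'
      by_cases hcb : c = b
      · subst hcb; simp
      · rwa [Function.update_of_ne hcb]
    have hadj : Adj (Function.update ω b true) x₀ x₁ := by
      rcases hb with ⟨rfl, rfl⟩ | ⟨rfl, rfl⟩
      · exact ⟨b.2, Or.inl ⟨rfl, by simp⟩⟩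
      · exact ⟨b.2, Or.inr ⟨rfl, by simp⟩⟩
    have hkey : ∀ z, Conn (Function.update ω b true) x₁ z → Conn ω x₀ z ∨ Conn ω x₁ z := by
      intro z hz
      induction hz with
      | refl => exact Or.inr (Conn.refl _ _)
      | @tail u w _ ha ih =>
        obtain ⟨i, ⟨e1, e2⟩ | ⟨e1, e2⟩⟩ := ha
        · by_cases hcb : (u, i) = b
          · have hw : w = tip b := by rw [← hcb, e1]; rfl
            rcases hb with ⟨_, h⟩ | ⟨_, h⟩
            · right; rw [hw, h]; exact Conn.refl _ _
            · left; rw [hw, h]; exact Conn.refl _ _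
          · rw [Function.update_of_ne hcb] at e2
            have ha' : Adj ω u w := ⟨i, Or.inl ⟨e1, e2⟩⟩
            exact ih.imp (fun h => Relation.ReflTransGen.tail h ha')
              (fun h => Relation.ReflTransGen.tail h ha')
        · by_cases hcb : (w, i) = b
          · have hw : w = b.1 := by rw [← hcb]
            rcases hb with ⟨h, _⟩ | ⟨h, _⟩
            · left; rw [hw, h]; exact Conn.refl _ _
            · right; rw [hw, h]; exact Conn.refl _ _
          · rw [Function.update_of_ne hcb] at e2
            have ha' : Adj ω u w := ⟨i, Or.inr ⟨e1, e2⟩⟩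
            exact ih.imp (fun h => Relation.ReflTransGen.tail h ha')
              (fun h => Relation.ReflTransGen.tail h ha')
    refine ⟨(hx.mono hle).conn (Relation.ReflTransGen.single hadj), hy.mono hle, fun h => ?_⟩
    rcases hkey y h with h | h
    · exact hc h
    · exact hx1 (hy.conn h.symm)

lemma NN_edge (hP : IsBernoulli d p P) (hd : 0 < d) (hp0 : 0 < p) (hp1 : p < 1) (x : V d)
    (i : Fin d) : P (NN x (x + unitVec d i)) = 0 := by
  have := NN_shift x 0 (unitVec d i)
  rw [zero_add, add_comm] at this
  rw [← this, bern_shift hP, edge_null hP hd hp0 hp1]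

lemma lattice_induction (S : V d → Prop) (y : V d) (h0 : S y)
    (hp : ∀ x i, S x → S (x + unitVec d i)) (hm : ∀ x i, S x → S (x - unitVec d i)) (x : V d) :
    S x := by
  have h1 : ∀ (i : Fin d) (n : ℤ) (x : V d), S x → S (x + n • unitVec d i) := by
    intro i n
    induction n using Int.induction_on with
    | zero => intro x hx; simpa using hx
    | succ n ih =>
      intro x hx
      rw [add_smul, one_smul, ← add_assoc]
      exact hp _ _ (ih x hx)
    | pred n ih =>
      intro x hx
      rw [sub_smul, one_smul, ← add_sub_assoc]
      exact hm _ _ (ih x hx)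
  have h2 : ∀ T : Finset (Fin d), S (y + ∑ i ∈ T, (x i - y i) • unitVec d i) := by
    classical
    intro T
    induction T using Finset.induction_on with
    | empty => simpa using h0
    | insert i T hi ih =>
      rw [Finset.sum_insert hi, add_comm ((x i - y i) • unitVec d i), ← add_assoc]
      exact h1 i _ _ ih
  have h3 := h2 Finset.univ
  have e : y + ∑ i, (x i - y i) • unitVec d i = x := by
    ext j
    simp [unitVec, Finset.sum_apply]
  rwa [e] at h3

/-- Uniqueness of the infinite cluster. -/
theorem NN_null (hP : IsBernoulli d p P) (hd : 0 < d) (hp0 : 0 < p) (hp1 : p < 1) (x y : V d) :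
    P (NN x y) = 0 := by
  refine lattice_induction (fun x => P (NN x y) = 0) y ?_ ?_ ?_ x
  · have : NN y y = ∅ := by
      ext ω
      simp [NN, Conn.refl]
    rw [this, measure_empty]
  · intro z i hz
    refine NN_step hP hp0 y _ z (z, i) (Or.inr ⟨rfl, rfl⟩) ?_ hz
    rw [NN_symm]; exact NN_edge hP hd hp0 hp1 z i
  · intro z i hz
    refine NN_step hP hp0 y _ z (z - unitVec d i, i) (Or.inl ⟨rfl, by simp [tip]⟩) ?_ hz
    have := NN_edge hP hd hp0 hp1 (z - unitVec d i) i
    simpa using this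

end Uniq
end SRWPC

namespace SRWPC

section Erg
variable {d : ℕ}

lemma edgeOpen_iff (ω : Config d) (x e : V d) : edgeOpen ω x e ↔ Adj ω x (x + e) := by
  unfold edgeOpen Adj
  refine exists_congr fun i => or_congr ?_ ?_
  · rw [add_right_inj]
  · constructor
    · rintro ⟨rfl, h⟩
      exact ⟨by simp, by rwa [← sub_eq_add_neg]⟩
    · rintro ⟨h1, h2⟩
      have : e = -unitVec d i := by
        rw [add_assoc, eq_comm, add_eq_left] at h1
        exact eq_neg_of_add_eq_zero_left h1
      subst this
      exact ⟨rfl, by rwa [sub_eq_add_neg]⟩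

lemma edgeOpen_mem {ω : Config d} {x e : V d} (h : edgeOpen ω x e) : e ∈ Ud d := by
  obtain ⟨i, ⟨h, _⟩ | ⟨h, _⟩⟩ := h
  · simp [Ud, h]
  · simp [Ud, h]

lemma trans_eq_zero_iff (ω : Config d) (x e : V d) : trans ω x e = 0 ↔ ¬ edgeOpen ω x e := by
  classical
  unfold trans
  split_ifs with h
  · have : 0 < openDeg ω x := by
      unfold openDeg
      refine Finset.card_pos.2 ⟨e, ?_⟩
      simp [edgeOpen_mem h, h]
    have h2 : (0 : ℝ) < openDeg ω x := by exact_mod_cast this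
    simp [h, h2.ne']
  · simp [h]

lemma conn_of_path {ω : Config d} {γ : ℕ → V d} {n : ℕ} (h : IsOpenPath ω γ n) :
    Conn ω (γ 0) (γ n) := by
  induction n with
  | zero => exact Conn.refl _ _
  | succ n ih =>
    refine Relation.ReflTransGen.tail (ih fun k hk => h k (by omega)) ?_
    have := (edgeOpen_iff _ _ _).1 (h n (by omega)).2
    simpa using this

lemma path_of_conn {ω : Config d} {x y : V d} (h : Conn ω x y) :
    ∃ (γ : ℕ → V d) (n : ℕ), γ 0 = x ∧ IsOpenPath ω γ n ∧ γ n = y := by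
  induction h with
  | refl => exact ⟨fun _ => x, 0, rfl, fun k hk => by omega, rfl⟩
  | @tail y z _ ha ih =>
    obtain ⟨γ, n, h0, hp, hn⟩ := ih
    refine ⟨fun k => if k ≤ n then γ k else z, n + 1, by simp [h0], ?_, by simp⟩
    intro k hk
    by_cases hkn : k < n
    · have h1 : k + 1 ≤ n := hkn
      have h2 : k ≤ n := hkn.le
      simp only [h1, h2, if_true]
      exact hp k hkn
    · have : k = n := by omega
      subst this
      have ho : edgeOpen ω (γ k) (z - γ k) := by
        rw [edgeOpen_iff, hn]; simpa using ha
      simp only [le_refl, if_true, Nat.not_succ_le_self, if_false]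
      exact ⟨edgeOpen_mem ho, ho⟩

lemma memCluster_iff (ω : Config d) (x : V d) : memCluster ω x ↔ Infc ω x := by
  constructor
  · intro h hf
    obtain ⟨R, hR⟩ : ∃ R : ℕ, ∀ y, Conn ω x y → inBox y (R : ℝ) := by
      refine ⟨∑ y ∈ hf.toFinset, ∑ i, (y i).natAbs, fun y hy i => ?_⟩
      have h1 : (y i).natAbs ≤ ∑ i, (y i).natAbs :=
        Finset.single_le_sum (f := fun i => (y i).natAbs) (fun _ _ => Nat.zero_le _)
          (Finset.mem_univ i)
      have h2 : ∑ i, (y i).natAbs ≤ ∑ y ∈ hf.toFinset, ∑ i, (y i).natAbs :=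
        Finset.single_le_sum (f := fun y : V d => ∑ i, (y i).natAbs) (fun _ _ => Nat.zero_le _)
          (by simpa using hy)
      have h3 := h1.trans h2
      have h4 : |(y i : ℝ)| = ((y i).natAbs : ℝ) := by
        rw [Nat.cast_natAbs]; simp
      rw [h4]
      exact_mod_cast h3
    obtain ⟨γ, n, h0, hp, hn⟩ := h R
    refine hn (hR _ ?_)
    rw [← h0]
    exact conn_of_path hp
  · intro h R
    obtain ⟨y, hy, hc⟩ := (infc_iff ω x).1 h
      (Fintype.piFinset fun _ : Fin d => Finset.Icc (-(R : ℤ)) R)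
    obtain ⟨γ, n, h0, hp, hn⟩ := path_of_conn hc
    refine ⟨γ, n, h0, hp, fun hb => hy ?_⟩
    rw [Fintype.mem_piFinset]
    intro i
    have := hb i
    rw [hn] at this
    rw [Finset.mem_Icc, ← abs_le]
    exact_mod_cast this

lemma cluZero_eq : cluZero d = {ω | Infc ω 0} := by
  ext ω; simp [cluZero, memCluster_iff]

lemma measurable_cluZero : MeasurableSet (cluZero d) := by
  rw [cluZero_eq]; exact measurable_infc 0

variable {p : ℝ} {P : Measure (Config d)}

/-- Ergodicity of `P₀` along open edges. -/
theorem erg_cluster (hP : IsBernoulli d p P) (hd : 0 < d) (hp0 : 0 < p) (hp1 : p < 1)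
    (D : Set (Config d)) (hD : MeasurableSet D)
    (h : ∀ᵐ ω ∂(P[|cluZero d]), ω ∈ D → ∀ e : Step d, edgeOpen ω 0 e.1 → shift e.1 ω ∈ D) :
    (P[|cluZero d]) D = 0 ∨ (P[|cluZero d]) Dᶜ = 0 := by
  have := hP.1
  have hm := measurable_cluZero (d := d)
  have hac : P[|cluZero d] ≪ P.restrict (cluZero d) := by
    unfold ProbabilityTheory.cond
    exact Measure.smul_absolutelyContinuous
  by_cases hz : P (cluZero d) = 0
  · left
    exact hac (by rw [Measure.restrict_apply hD]; exact measure_mono_null Set.inter_subset_right hz)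
  have h1 : ∀ᵐ ω ∂P, ω ∈ cluZero d → ω ∈ D → ∀ e : Step d, edgeOpen ω 0 e.1 →
      shift e.1 ω ∈ D := by
    have hac' : P.restrict (cluZero d) ≪ P[|cluZero d] := by
      unfold ProbabilityTheory.cond
      refine Measure.absolutelyContinuous_smul ?_
      simp
    exact (ae_restrict_iff' hm).1 (hac'.ae_le h)
  have h2 : ∀ᵐ ω ∂P, ∀ x y, Infc ω x → Adj ω x y → shift x ω ∈ D → shift y ω ∈ D := by
    rw [ae_all_iff]
    intro x
    have := (bern_mp hP x).quasiMeasurePreserving.ae h1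
    filter_upwards [this] with ω hω y hx ha hxD
    have hin : shift x ω ∈ cluZero d := by
      rw [cluZero_eq]; simpa [infc_shift] using hx
    have ho : edgeOpen (shift x ω) 0 (y - x) := by
      rw [edgeOpen_iff, adj_shift]; simpa using ha
    have := hω hin hxD ⟨y - x, edgeOpen_mem ho⟩ ho
    simpa [shift_shift] using this
  have h3 : ∀ᵐ ω ∂P, ∀ x y, ω ∉ NN x y := by
    rw [ae_all_iff]; intro x
    rw [ae_all_iff]; intro y
    exact measure_eq_zero_iff_ae_notMem.1 (NN_null hP hd hp0 hp1 x y)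
  let E : Set (Config d) := ⋃ x, ({ω | Infc ω x} ∩ shift x ⁻¹' D)
  have hE : MeasurableSet E :=
    MeasurableSet.iUnion fun x => (measurable_infc x).inter (measurable_shift x hD)
  have hEinv : ∀ v, shift v ⁻¹' E = E := by
    intro v
    ext ω
    simp only [E, Set.mem_preimage, Set.mem_iUnion, Set.mem_inter_iff, Set.mem_ofPred_eq,
      infc_shift, shift_shift]
    constructor
    · rintro ⟨x, hx⟩; exact ⟨x + v, hx⟩
    · rintro ⟨x, hx⟩; exact ⟨x - v, by simpa using hx⟩
  have h4 : ∀ᵐ ω ∂P, ω ∈ cluZero d → (ω ∈ D ↔ ω ∈ E) := by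
    filter_upwards [h2, h3] with ω h2 h3 hω
    rw [cluZero_eq] at hω
    have hω' : Infc ω 0 := hω
    simp only [E, Set.mem_iUnion, Set.mem_inter_iff, Set.mem_ofPred_eq, Set.mem_preimage]
    constructor
    · intro hDω
      exact ⟨0, hω', by rwa [shift_zero]⟩
    · rintro ⟨x, hx, hxD⟩
      have hc : Conn ω x 0 := by
        by_contra hc
        exact h3 x 0 ⟨hx, hω', hc⟩
      have key : ∀ y, Conn ω x y → shift y ω ∈ D := by
        intro y hy
        induction hy with
        | refl => exact hxD
        | tail hc ha ih => exact h2 _ _ (hx.conn hc) ha ih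
      simpa [shift_zero] using key 0 hc
  rcases bern_erg hP hd E hE hEinv with h0 | h0
  · left
    refine hac ?_
    rw [Measure.restrict_apply hD, measure_eq_zero_iff_ae_notMem]
    filter_upwards [h4, measure_eq_zero_iff_ae_notMem.1 h0] with ω h4 h5 h6
    exact h5 ((h4 h6.2).1 h6.1)
  · right
    refine hac ?_
    rw [Measure.restrict_apply hD.compl, measure_eq_zero_iff_ae_notMem]
    filter_upwards [h4, measure_eq_zero_iff_ae_notMem.1 h0] with ω h4 h5 h6
    exact h6.1 ((h4 h6.2).2 (by simpa using h5))

end Erg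

section Main
variable {d : ℕ}

lemma measurable_kernelStep {κ : Config d → Step d → ℝ}
    (hκ : ∀ e : Step d, Measurable (fun ω => κ ω e)) {f : Config d → ℝ} (hf : Measurable f) :
    Measurable (kernelStep κ f) := by
  unfold kernelStep
  exact Finset.measurable_sum _ fun e _ => (hκ e).mul (hf.comp (measurable_shift e.1))

lemma kernelStep_ind_bounds {κ : Config d → Step d → ℝ} (h0 : ∀ ω e, 0 ≤ κ ω e) {ω : Config d}
    (hs : ∑ e : Step d, κ ω e = 1) (D : Set (Config d)) :
    0 ≤ kernelStep κ (D.indicator 1) ω ∧ kernelStep κ (D.indicator 1) ω ≤ 1 := by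
  unfold kernelStep
  constructor
  · refine Finset.sum_nonneg fun e _ => mul_nonneg (h0 _ _) (Set.indicator_nonneg (by simp) _)
  · rw [← hs]
    refine Finset.sum_le_sum fun e _ => ?_
    refine mul_le_of_le_one_right (h0 _ _) ?_
    exact Set.indicator_le_self' (by simp) _

lemma mem_of_kernelStep_eq_one {κ : Config d → Step d → ℝ} (h0 : ∀ ω e, 0 ≤ κ ω e) {ω : Config d}
    (hs : ∑ e : Step d, κ ω e = 1) {D : Set (Config d)}
    (h : kernelStep κ (D.indicator 1) ω = 1) (e : Step d) (he : κ ω e ≠ 0) :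
    shift e.1 ω ∈ D := by
  by_contra hne
  have h1 : ∑ e : Step d, (κ ω e - κ ω e * D.indicator 1 (shift e.1 ω)) = 0 := by
    rw [Finset.sum_sub_distrib, hs]
    unfold kernelStep at h
    rw [h]; simp
  rw [Finset.sum_eq_zero_iff_of_nonneg] at h1
  · have := h1 e (Finset.mem_univ e)
    simp [hne] at this
    exact he this
  · intro e _
    refine sub_nonneg.2 (mul_le_of_le_one_right (h0 _ _) ?_)
    exact Set.indicator_le_self' (by simp) _

/-- Key consequence for a chain: `D` absorbing implies trivial. -/
lemma absorbing_trivial {p : ℝ} {P : Measure (Config d)} (hP : IsBernoulli d p P) (hd : 0 < d)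
    (hp0 : 0 < p) (hp1 : p < 1) {κ : Config d → Step d → ℝ} (hκ : κ ∈ PiT d (P[|cluZero d]))
    (D : Set (Config d)) (hD : MeasurableSet D)
    (h : ∀ᵐ ω ∂(P[|cluZero d]), ω ∈ D → kernelStep κ (D.indicator 1) ω = 1) :
    (P[|cluZero d]) D = 0 ∨ (P[|cluZero d]) Dᶜ = 0 := by
  obtain ⟨hκm, hκ0, _, hκs, hκz⟩ := hκ
  refine erg_cluster hP hd hp0 hp1 D hD ?_
  filter_upwards [h, hκs, ae_all_iff.2 hκz] with ω h1 h2 h3 hω e he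
  refine mem_of_kernelStep_eq_one hκ0 h2 (h1 hω) e ?_
  rw [Ne, h3 e, trans_eq_zero_iff]
  exact not_not.2 he

lemma fin_cond {P : Measure (Config d)} [IsProbabilityMeasure P] :
    IsFiniteMeasure (P[|cluZero d]) := by
  by_cases h : P (cluZero d) = 0
  · rw [ProbabilityTheory.cond_eq_zero_of_meas_eq_zero h]; infer_instance
  · have := cond_isProbabilityMeasure h
    infer_instance

lemma uniq_half {p : ℝ} {P : Measure (Config d)} (hP : IsBernoulli d p P) (hd : 0 < d)
    (hp0 : 0 < p) (hp1 : p < 1) {κ : Config d → Step d → ℝ} (hκ : κ ∈ PiT d (P[|cluZero d]))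
    (Q Q' : Measure (Config d)) [IsProbabilityMeasure Q] [IsProbabilityMeasure Q']
    (hQ : Q ≪ (P[|cluZero d])) (hQ' : Q' ≪ (P[|cluZero d]))
    (hi : IsInvariant κ Q) (hi' : IsInvariant κ Q') :
    ∀ᵐ ω ∂(P[|cluZero d]), (Q.rnDeriv (P[|cluZero d]) ω).toReal ≤
      (Q'.rnDeriv (P[|cluZero d]) ω).toReal := by
  have := hP.1
  have fin0 : IsFiniteMeasure (P[|cluZero d]) := fin_cond
  have hL : Q.HaveLebesgueDecomposition (P[|cluZero d]) :=
    Measure.haveLebesgueDecomposition_of_sigmaFinite Q _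
  have hL' : Q'.HaveLebesgueDecomposition (P[|cluZero d]) :=
    Measure.haveLebesgueDecomposition_of_sigmaFinite Q' _
  set P₀ := P[|cluZero d] with hP₀
  set φ : Config d → ℝ := fun ω => (Q.rnDeriv P₀ ω).toReal with hφ
  set φ' : Config d → ℝ := fun ω => (Q'.rnDeriv P₀ ω).toReal with hφ'
  have mφ : Measurable φ := (Measure.measurable_rnDeriv _ _).ennreal_toReal
  have mφ' : Measurable φ' := (Measure.measurable_rnDeriv _ _).ennreal_toReal
  have iφ : Integrable φ P₀ := Measure.integrable_toReal_rnDeriv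
  have iφ' : Integrable φ' P₀ := Measure.integrable_toReal_rnDeriv
  let D : Set (Config d) := {ω | φ' ω < φ ω}
  have hD : MeasurableSet D := measurableSet_lt mφ' mφ
  obtain ⟨hκm, hκ0, _, hκs, hκz⟩ := id hκ
  set f : Config d → ℝ := D.indicator 1 with hf
  have mf : Measurable f := measurable_one.indicator hD
  have mk : Measurable (kernelStep κ f) := measurable_kernelStep hκm mf
  have hfb : ∃ C, ∀ ω, |f ω| ≤ C := by
    refine ⟨1, fun ω => ?_⟩
    by_cases hω : ω ∈ D <;> simp [hf, hω]
  have kb : ∀ᵐ ω ∂P₀, ‖kernelStep κ f ω‖ ≤ 1 := by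
    filter_upwards [hκs] with ω hs
    have := kernelStep_ind_bounds hκ0 hs D
    rw [Real.norm_of_nonneg this.1]; exact this.2
  have fb : ∀ᵐ ω ∂P₀, ‖f ω‖ ≤ 1 := by
    refine Eventually.of_forall fun ω => ?_
    by_cases hω : ω ∈ D <;> simp [hf, hω]
  have e1 : ∫ ω, φ ω * kernelStep κ f ω ∂P₀ = ∫ ω, φ ω * f ω ∂P₀ := by
    have h1 := integral_rnDeriv_smul hQ (f := kernelStep κ f)
    have h2 := integral_rnDeriv_smul hQ (f := f)
    simp only [smul_eq_mul] at h1 h2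
    rw [h1, h2]; exact hi f mf hfb
  have e2 : ∫ ω, φ' ω * kernelStep κ f ω ∂P₀ = ∫ ω, φ' ω * f ω ∂P₀ := by
    have h1 := integral_rnDeriv_smul hQ' (f := kernelStep κ f)
    have h2 := integral_rnDeriv_smul hQ' (f := f)
    simp only [smul_eq_mul] at h1 h2
    rw [h1, h2]; exact hi' f mf hfb
  have i1 : Integrable (fun ω => φ ω * kernelStep κ f ω) P₀ :=
    iφ.mul_bdd mk.aestronglyMeasurable kb
  have i2 : Integrable (fun ω => φ ω * f ω) P₀ := iφ.mul_bdd mf.aestronglyMeasurable fb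
  have i3 : Integrable (fun ω => φ' ω * kernelStep κ f ω) P₀ :=
    iφ'.mul_bdd mk.aestronglyMeasurable kb
  have i4 : Integrable (fun ω => φ' ω * f ω) P₀ := iφ'.mul_bdd mf.aestronglyMeasurable fb
  let g : Config d → ℝ := fun ω => (φ ω * f ω - φ' ω * f ω) -
    (φ ω * kernelStep κ f ω - φ' ω * kernelStep κ f ω)
  have hg0 : ∫ ω, g ω ∂P₀ = 0 := by
    simp only [g]
    have i24 : Integrable (fun ω => φ ω * f ω - φ' ω * f ω) P₀ := i2.sub i4
    have i13 : Integrable (fun ω => φ ω * kernelStep κ f ω - φ' ω * kernelStep κ f ω) P₀ :=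
      i1.sub i3
    rw [integral_sub i24 i13, integral_sub i2 i4, integral_sub i1 i3, e1, e2]
    simp
  have gnn : 0 ≤ᵐ[P₀] g := by
    filter_upwards [hκs] with ω hs
    have hb := kernelStep_ind_bounds hκ0 hs D
    simp only [Pi.zero_apply, g]
    by_cases hω : ω ∈ D
    · have h1 : φ' ω < φ ω := hω
      have h2 : f ω = 1 := by simp [hf, hω]
      rw [h2]
      nlinarith [mul_nonneg (sub_nonneg.2 h1.le) (sub_nonneg.2 hb.2)]
    · have h1 : φ ω ≤ φ' ω := not_lt.1 hω
      have h2 : f ω = 0 := by simp [hf, hω]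
      rw [h2]
      nlinarith [mul_nonneg (sub_nonneg.2 h1) hb.1]
  have hgz : g =ᵐ[P₀] 0 :=
    (integral_eq_zero_iff_of_nonneg_ae gnn ((i2.sub i4).sub (i1.sub i3))).1 hg0
  have habs : ∀ᵐ ω ∂P₀, ω ∈ D → kernelStep κ (D.indicator 1) ω = 1 := by
    filter_upwards [hgz] with ω hω hωD
    have h1 : φ' ω < φ ω := hωD
    have h2 : f ω = 1 := by simp [hf, hωD]
    simp only [Pi.zero_apply, g, h2] at hω
    have h3 : (φ ω - φ' ω) * (1 - kernelStep κ f ω) = 0 := by linarith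
    rcases mul_eq_zero.1 h3 with h | h
    · linarith
    · linarith
  have iQ : ∫ ω, φ ω ∂P₀ = 1 := by
    rw [Measure.integral_toReal_rnDeriv hQ]; simp
  have iQ' : ∫ ω, φ' ω ∂P₀ = 1 := by
    rw [Measure.integral_toReal_rnDeriv hQ']; simp
  rcases absorbing_trivial hP hd hp0 hp1 hκ D hD habs with h | h
  · filter_upwards [measure_eq_zero_iff_ae_notMem.1 h] with ω hω
    exact not_lt.1 hω
  · have hle : ∀ᵐ ω ∂P₀, φ' ω < φ ω := by
      filter_upwards [measure_eq_zero_iff_ae_notMem.1 h] with ω hω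
      simpa [D] using hω
    have hz : (fun ω => φ ω - φ' ω) =ᵐ[P₀] 0 := by
      have isub : Integrable (fun ω => φ ω - φ' ω) P₀ := iφ.sub iφ'
      refine (integral_eq_zero_iff_of_nonneg_ae ?_ isub).1 ?_
      · filter_upwards [hle] with ω hω
        exact sub_nonneg.2 hω.le
      · rw [integral_sub iφ iφ', iQ, iQ', sub_self]
    filter_upwards [hz] with ω hω
    exact (sub_eq_zero.1 hω).le

end Main
end SRWPC

open SRWPC in
/-- **Ergodicity and uniqueness of absolutely continuous invariant measures for the
environment chain** (Theorem 3.2). -/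
theorem environment_chain_ergodic
    (d : ℕ) (hd : 2 ≤ d) (p : ℝ) (hp0 : 0 < p) (hp1 : p < 1) (hpc : pc d < p)
    (P : Measure (Config d)) (hP : IsBernoulli d p P)
    (κ : Config d → Step d → ℝ) (hκ : κ ∈ PiT d (P[|cluZero d]))
    (Q : Measure (Config d)) (hQprob : IsProbabilityMeasure Q)
    (hQac : Q ≪ (P[|cluZero d])) (hQinv : IsInvariant κ Q) :
    (P[|cluZero d]) ≪ Q ∧
    (∀ D : Set (Config d), MeasurableSet D →
      kernelStep κ (D.indicator 1) =ᵐ[Q] D.indicator 1 → Q D = 0 ∨ Q D = 1) ∧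
    (∀ Q' : Measure (Config d), IsProbabilityMeasure Q' → Q' ≪ (P[|cluZero d]) →
      IsInvariant κ Q' → Q' = Q) := by
  have hd0 : 0 < d := by omega
  have hPp := hP.1
  have fin0 : IsFiniteMeasure (P[|cluZero d]) := fin_cond
  have hL : ∀ (R : Measure (Config d)) [IsProbabilityMeasure R],
      R.HaveLebesgueDecomposition (P[|cluZero d]) :=
    fun R _ => Measure.haveLebesgueDecomposition_of_sigmaFinite R _
  have hLQ := hL Q
  have hA : (P[|cluZero d]) ≪ Q := by
    have hκ' := hκ
    obtain ⟨hκm, hκ0, _, hκs, hκz⟩ := hκ'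
    set ρ := Q.rnDeriv (P[|cluZero d]) with hρ
    have mρ : Measurable ρ := Measure.measurable_rnDeriv _ _
    have hQd : (P[|cluZero d]).withDensity ρ = Q := Measure.withDensity_rnDeriv_eq _ _ hQac
    let A : Set (Config d) := {ω | ρ ω ≠ 0}
    have mA : MeasurableSet A := (measurableSet_eq_fun mρ measurable_const).compl
    have hAae : ∀ᵐ ω ∂Q, ω ∈ A := by
      rw [← hQd, ae_withDensity_iff mρ]
      exact Eventually.of_forall fun ω h => h
    have mf : Measurable (A.indicator (1 : Config d → ℝ)) := measurable_one.indicator mA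
    have mk := measurable_kernelStep hκm mf
    have kb : ∀ᵐ ω ∂Q, 0 ≤ kernelStep κ (A.indicator 1) ω ∧
        kernelStep κ (A.indicator 1) ω ≤ 1 := by
      filter_upwards [hQac.ae_le hκs] with ω hs
      exact kernelStep_ind_bounds hκ0 hs A
    have ik : Integrable (kernelStep κ (A.indicator 1)) Q := by
      refine Integrable.of_bound mk.aestronglyMeasurable 1 ?_
      filter_upwards [kb] with ω hb
      rw [Real.norm_of_nonneg hb.1]; exact hb.2
    have hintA : ∫ ω, kernelStep κ (A.indicator 1) ω ∂Q = 1 := by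
      rw [hQinv _ mf ⟨1, fun ω => by by_cases hω : ω ∈ A <;> simp [hω]⟩]
      have : A.indicator (1 : Config d → ℝ) =ᵐ[Q] fun _ => (1 : ℝ) := by
        filter_upwards [hAae] with ω hω
        simp [hω]
      rw [integral_congr_ae this]; simp
    have isub : Integrable (fun ω => 1 - kernelStep κ (A.indicator 1) ω) Q :=
      (integrable_const 1).sub ik
    have hz : (fun ω => 1 - kernelStep κ (A.indicator 1) ω) =ᵐ[Q] 0 := by
      refine (integral_eq_zero_iff_of_nonneg_ae ?_ isub).1 ?_
      · filter_upwards [kb] with ω hb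
        exact sub_nonneg.2 hb.2
      · rw [integral_sub (integrable_const 1) ik, hintA]; simp
    have habs : ∀ᵐ ω ∂(P[|cluZero d]), ω ∈ A → kernelStep κ (A.indicator 1) ω = 1 := by
      have h1 : ∀ᵐ ω ∂Q, kernelStep κ (A.indicator 1) ω = 1 := by
        filter_upwards [hz] with ω hω
        have : 1 - kernelStep κ (A.indicator 1) ω = 0 := hω
        linarith
      rw [← hQd, ae_withDensity_iff mρ] at h1
      exact h1
    rcases absorbing_trivial hP hd0 hp0 hp1 hκ A mA habs with h | h
    · exfalso
      have h1 : ∀ᵐ ω ∂Q, ω ∉ A := measure_eq_zero_iff_ae_notMem.1 (hQac h)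
      have h2 : ∀ᵐ ω ∂Q, False := by
        filter_upwards [h1, hAae] with ω a b using a b
      simp at h2
      exact IsProbabilityMeasure.ne_zero Q h2
    · rw [← hQd]
      refine withDensity_absolutelyContinuous' mρ.aemeasurable ?_
      filter_upwards [measure_eq_zero_iff_ae_notMem.1 h] with ω hω
      exact not_not.1 hω
  refine ⟨hA, ?_, ?_⟩
  · intro D hD h
    have h1 : ∀ᵐ ω ∂(P[|cluZero d]), ω ∈ D → kernelStep κ (D.indicator 1) ω = 1 := by
      filter_upwards [hA.ae_le h] with ω hω hωD
      rw [hω]; simp [hωD]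
    rcases absorbing_trivial hP hd0 hp0 hp1 hκ D hD h1 with h | h
    · exact Or.inl (hQac h)
    · exact Or.inr ((prob_compl_eq_zero_iff hD).1 (hQac h))
  · intro Q' hQ'p hQ'ac hQ'inv
    have hLQ' := hL Q'
    have h1 := uniq_half hP hd0 hp0 hp1 hκ Q Q' hQac hQ'ac hQinv hQ'inv
    have h2 := uniq_half hP hd0 hp0 hp1 hκ Q' Q hQ'ac hQac hQ'inv hQinv
    rw [← Measure.withDensity_rnDeriv_eq Q _ hQac, ← Measure.withDensity_rnDeriv_eq Q' _ hQ'ac]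
    refine withDensity_congr_ae ?_
    filter_upwards [h1, h2, Measure.rnDeriv_ne_top Q (P[|cluZero d]),
      Measure.rnDeriv_ne_top Q' (P[|cluZero d])] with ω a b t t'
    exact (ENNReal.toReal_eq_toReal_iff' t' t).1 (le_antisymm b a)
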